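/- arXiv:2205.00248 — 6 statements merged into one kernel-verified Lean document; each statement's English description precedes it below -/
import Mathlib

section
/- Let S be a C₀-semigroup on a real separable Hilbert space H with infinitesimal generator G, let T ∈ (0,∞), and let 𝒮(t) be defined on L²((0,T);H) by (𝒮(t)v)(θ) = S(t)(v(θ)) for a.e. θ ∈ (0,T). Then for v ∈ L²((0,T);H), the limit lim_{h↓0} h⁻¹(𝒮(h)v − v) exists in L²((0,T);H) if and only if v(θ) ∈ D(G) for a.e. θ ∈ (0,T) and the function θ ↦ G(v(θ)) belongs to L²((0,T);H); in that case the limit equals the function θ ↦ G(v(θ)). (That is, the infinitesimal generator of the C₀-semigroup (𝒮(t))_{t≥0} is the Bochner-space counterpart of G with domain L²((0,T);D(G)).) -/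
/-!
The quotients `h⁻¹ (S h x - x)` converge to `y` as `h ↓ 0` as soon as they do so along *some*
sequence `h ↓ 0`: in that case `S t x - x = ∫₀ᵗ S s y ds` for `t ∈ [0, 1]`
(`semigroup_sub_eq_integral`), and the fundamental theorem of calculus recovers the full limit
(`tendsto_quotient_of_le`). The same formula bounds the quotients by `M ‖y‖`, where
`M` bounds `‖S t‖` on `[0, 1]` and exists by Banach–Steinhaus.

If the `L²`-quotients of `v` converge to `w`, then a subsequence converges almost everywhere, so by
the first remark `(v θ, w θ)` lies in the graph of `G` for a.e. `θ`. Conversely, if `(v θ, w θ)` is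
a.e. in the graph, the pointwise quotients converge a.e. to `w` and are dominated by `M ‖w θ‖`, and
dominated convergence gives the limit in `L²`.
-/

open MeasureTheory Filter Topology Set

theorem semigroup_bound {H : Type*} [NormedAddCommGroup H] [InnerProductSpace ℝ H]
    [CompleteSpace H] (S : ℝ → H →L[ℝ] H)
    (hScont : ∀ x : H, ContinuousOn (fun t => S t x) (Set.Ici 0)) :
    ∃ M : ℝ, 0 ≤ M ∧ ∀ t ∈ Set.Icc (0:ℝ) 1, ∀ x, ‖S t x‖ ≤ M * ‖x‖ := by
  obtain ⟨C, hC⟩ := banach_steinhaus (g := fun t : Set.Icc (0:ℝ) 1 => S t) (fun x => by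
    obtain ⟨C, hC⟩ := isCompact_Icc.exists_bound_of_continuousOn
      ((hScont x).mono fun t (ht : t ∈ Set.Icc (0:ℝ) 1) => ht.1)
    exact ⟨C, fun t => hC t t.2⟩)
  refine ⟨C, (norm_nonneg _).trans (hC ⟨0, by simp⟩), fun t ht x => ?_⟩
  exact (S t).le_of_opNorm_le (hC ⟨t, ht⟩) x

/-- Extending an orbit to negative times by its initial value makes it continuous on all of `ℝ`,
as the fundamental theorem of calculus at time `0` requires. -/
theorem continuous_orbit_max {H : Type*} [NormedAddCommGroup H] [InnerProductSpace ℝ H]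
    (S : ℝ → H →L[ℝ] H)
    (hScont : ∀ x : H, ContinuousOn (fun t => S t x) (Set.Ici 0)) (x : H) :
    Continuous fun t : ℝ => S (max t 0) x :=
  (hScont x).comp_continuous (continuous_id.max continuous_const) (fun t => le_max_right t 0)

/-- The integral formula for an orbit, from convergence of the quotients along an arbitrary
nontrivial filter `l` of positive times tending to `0`. It follows by passing to the limit in
`∫₀ᵗ S s (h⁻¹ (S h x - x)) ds = h⁻¹ ∫ₜᵗ⁺ʰ S s x ds - h⁻¹ ∫₀ʰ S s x ds`. -/
theorem semigroup_sub_eq_integral {H : Type*} [NormedAddCommGroup H] [InnerProductSpace ℝ H]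
    [CompleteSpace H] (S : ℝ → H →L[ℝ] H)
    (hS0 : S 0 = ContinuousLinearMap.id ℝ H)
    (hSadd : ∀ s t : ℝ, 0 ≤ s → 0 ≤ t → S (t + s) = (S t).comp (S s))
    (hScont : ∀ x : H, ContinuousOn (fun t => S t x) (Set.Ici 0))
    (l : Filter ℝ) [l.NeBot] (hl : l ≤ 𝓝[>] 0) (x y : H)
    (hxy : Tendsto (fun h : ℝ => h⁻¹ • (S h x - x)) l (𝓝 y)) (t : ℝ) (ht : t ∈ Set.Icc (0:ℝ) 1) :
    S t x - x = ∫ s in (0:ℝ)..t, S (max s 0) y := by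
  obtain ⟨M, hM0, hM⟩ := semigroup_bound S hScont
  have hc := continuous_orbit_max S hScont
  have hpos : ∀ᶠ h in l, 0 < h := hl self_mem_nhdsWithin
  have hint : ∀ z a b, IntervalIntegrable (fun s => S (max s 0) z) volume a b :=
    fun z a b => (hc z).intervalIntegrable a b
  have hL : Tendsto (fun h : ℝ => ∫ s in (0:ℝ)..t, S (max s 0) (h⁻¹ • (S h x - x))) l
      (𝓝 (∫ s in (0:ℝ)..t, S (max s 0) y)) := by
    rw [tendsto_iff_norm_sub_tendsto_zero] at hxy ⊢
    have h1 := hxy.const_mul (M * |t - 0|)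
    rw [mul_zero] at h1
    refine squeeze_zero (fun _ => norm_nonneg _) (fun h => ?_) h1
    rw [← intervalIntegral.integral_sub (hint _ _ _) (hint _ _ _)]
    refine (intervalIntegral.norm_integral_le_of_norm_le_const
      (C := M * ‖h⁻¹ • (S h x - x) - y‖) fun s hs => ?_).trans_eq (by ring)
    rw [Set.uIoc_of_le ht.1] at hs
    rw [← map_sub, max_eq_left hs.1.le]
    exact hM s ⟨hs.1.le, hs.2.trans ht.2⟩ _
  have hF : ∀ u, HasDerivAt (fun u => ∫ s in (0:ℝ)..u, S (max s 0) x) (S (max u 0) x) u :=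
    fun u => (hc x).integral_hasStrictDerivAt 0 u |>.hasDerivAt
  have hR := ((hF t).tendsto_slope_zero_right.mono_left hl).sub
    ((hF 0).tendsto_slope_zero_right.mono_left hl)
  simp only [max_eq_left ht.1, max_self, hS0, ContinuousLinearMap.id_apply] at hR
  refine tendsto_nhds_unique hR (hL.congr' ?_)
  filter_upwards [hpos] with h hh
  have e1 : ∫ s in (0:ℝ)..t, S (max s 0) (h⁻¹ • (S h x - x))
      = ∫ s in (0:ℝ)..t, (h⁻¹ • (S (max (s + h) 0) x - S (max s 0) x)) := by
    refine intervalIntegral.integral_congr fun s hs => ?_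
    rw [Set.uIcc_of_le ht.1] at hs
    have : 0 ≤ s + h := add_nonneg hs.1 hh.le
    simp only [map_smul, map_sub, max_eq_left hs.1, max_eq_left this, hSadd h s hh.le hs.1,
      ContinuousLinearMap.comp_apply]
  have e2 : ∫ s in (0:ℝ)..t, S (max (s + h) 0) x = ∫ s in (0 + h)..(t + h), S (max s 0) x :=
    intervalIntegral.integral_comp_add_right (fun s => S (max s 0) x) h
  have hint' : IntervalIntegrable (fun s => S (max (s + h) 0) x) volume 0 t :=
    ((hc x).comp (continuous_id.add continuous_const)).intervalIntegrable _ _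
  rw [e1, intervalIntegral.integral_smul, intervalIntegral.integral_sub hint' (hint _ _ _), e2,
    ← smul_sub, intervalIntegral.integral_same, zero_add,
    ← intervalIntegral.integral_add_adjacent_intervals (hint x 0 h) (hint x h (t + h))]
  congr 1
  abel

/-- Convergence of the quotients along a single filter of positive times tending to `0` forces
convergence as `h ↓ 0`. -/
theorem tendsto_quotient_of_le {H : Type*} [NormedAddCommGroup H] [InnerProductSpace ℝ H]
    [CompleteSpace H] (S : ℝ → H →L[ℝ] H)
    (hS0 : S 0 = ContinuousLinearMap.id ℝ H)
    (hSadd : ∀ s t : ℝ, 0 ≤ s → 0 ≤ t → S (t + s) = (S t).comp (S s))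
    (hScont : ∀ x : H, ContinuousOn (fun t => S t x) (Set.Ici 0))
    (l : Filter ℝ) [l.NeBot] (hl : l ≤ 𝓝[>] 0) (x y : H)
    (hxy : Tendsto (fun h : ℝ => h⁻¹ • (S h x - x)) l (𝓝 y)) :
    Tendsto (fun h : ℝ => h⁻¹ • (S h x - x)) (𝓝[>] 0) (𝓝 y) := by
  have hF : HasDerivAt (fun u => ∫ s in (0:ℝ)..u, S (max s 0) y) (S (max 0 0) y) 0 :=
    (continuous_orbit_max S hScont y).integral_hasStrictDerivAt 0 0 |>.hasDerivAt
  have h1 := hF.tendsto_slope_zero_right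
  simp only [max_self, hS0, ContinuousLinearMap.id_apply, zero_add,
    intervalIntegral.integral_same, sub_zero] at h1
  refine h1.congr' ?_
  filter_upwards [Ioc_mem_nhdsGT (zero_lt_one' ℝ)] with h hh
  rw [semigroup_sub_eq_integral S hS0 hSadd hScont l hl x y hxy h ⟨hh.1.le, hh.2⟩]

theorem norm_quotient_le {H : Type*} [NormedAddCommGroup H] [InnerProductSpace ℝ H]
    [CompleteSpace H] (S : ℝ → H →L[ℝ] H)
    (hS0 : S 0 = ContinuousLinearMap.id ℝ H)
    (hSadd : ∀ s t : ℝ, 0 ≤ s → 0 ≤ t → S (t + s) = (S t).comp (S s))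
    (hScont : ∀ x : H, ContinuousOn (fun t => S t x) (Set.Ici 0))
    (M : ℝ) (hM : ∀ t ∈ Set.Icc (0:ℝ) 1, ∀ x, ‖S t x‖ ≤ M * ‖x‖) (x y : H)
    (hxy : Tendsto (fun h : ℝ => h⁻¹ • (S h x - x)) (𝓝[>] 0) (𝓝 y))
    (h : ℝ) (hh : h ∈ Set.Ioc (0:ℝ) 1) :
    ‖h⁻¹ • (S h x - x)‖ ≤ M * ‖y‖ := by
  rw [semigroup_sub_eq_integral S hS0 hSadd hScont _ le_rfl x y hxy h ⟨hh.1.le, hh.2⟩, norm_smul,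
    norm_inv, Real.norm_of_nonneg hh.1.le, inv_mul_le_iff₀ hh.1]
  refine (intervalIntegral.norm_integral_le_of_norm_le_const
    (C := M * ‖y‖) fun s hs => ?_).trans_eq (by rw [sub_zero, abs_of_pos hh.1, mul_comm])
  rw [Set.uIoc_of_le hh.1.le] at hs
  rw [max_eq_left hs.1.le]
  exact hM s ⟨hs.1.le, hs.2.trans hh.2⟩ _

/-- Dominated convergence in `L²`, along a countably generated filter and with a dominating
function given as the norm of an `L²` function. -/
theorem tendsto_Lp_two_of_dominated {H α ι : Type*} [NormedAddCommGroup H] [MeasurableSpace α]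
    {μ : Measure α} {l : Filter ι} [l.IsCountablyGenerated] (f : ι → Lp H 2 μ) (w : Lp H 2 μ)
    (F : ι → α → H) (hF : ∀ᶠ i in l, (f i : α → H) =ᵐ[μ] F i) (C : ℝ) (hC : 0 ≤ C)
    (hb : ∀ᶠ i in l, ∀ᵐ a ∂μ, ‖F i a - w a‖ ≤ C * ‖w a‖)
    (hlim : ∀ᵐ a ∂μ, Tendsto (fun i => F i a) l (𝓝 (w a))) :
    Tendsto f l (𝓝 w) := by
  rw [Lp.tendsto_Lp_iff_tendsto_eLpNorm']
  have hkey : Tendsto (fun i => ∫⁻ a, ‖(f i : α → H) a - w a‖ₑ ^ (2:ℝ) ∂μ) l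
      (𝓝 (∫⁻ _, 0 ∂μ)) := by
    have hcongr : (fun i => ∫⁻ a, ‖F i a - w a‖ₑ ^ (2:ℝ) ∂μ) =ᶠ[l]
        (fun i => ∫⁻ a, ‖(f i : α → H) a - w a‖ₑ ^ (2:ℝ) ∂μ) := by
      filter_upwards [hF] with i hi
      refine lintegral_congr_ae ?_
      filter_upwards [hi] with a ha
      rw [ha]
    refine Tendsto.congr' hcongr ?_
    refine tendsto_lintegral_filter_of_dominated_convergence'
      (fun a => (ENNReal.ofReal C * ‖w a‖ₑ) ^ (2:ℝ)) ?_ ?_ ?_ ?_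
    · filter_upwards [hF] with i hi
      exact ((((Lp.aestronglyMeasurable (f i)).congr hi).sub
        (Lp.aestronglyMeasurable w)).enorm.pow_const _)
    · filter_upwards [hb] with i hi
      filter_upwards [hi] with a ha
      gcongr
      rw [← ofReal_norm, ← ofReal_norm, ← ENNReal.ofReal_mul hC]
      exact ENNReal.ofReal_le_ofReal ha
    · simp_rw [ENNReal.mul_rpow_of_nonneg _ _ (zero_le_two (α := ℝ))]
      rw [lintegral_const_mul' _ _ (by finiteness)]
      refine ENNReal.mul_ne_top (by finiteness) ?_
      have := lintegral_rpow_enorm_lt_top_of_eLpNorm_lt_top (by norm_num) (by norm_num)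
        (Lp.eLpNorm_lt_top w)
      simpa using this.ne
    · filter_upwards [hlim] with a ha
      have h1 : Tendsto (fun i => F i a - w a) l (𝓝 0) := by
        simpa using ha.sub_const (w a)
      have h2 := (ENNReal.continuous_rpow_const (y := (2:ℝ))).tendsto _ |>.comp h1.enorm
      simpa [Function.comp_def] using h2
  rw [lintegral_zero] at hkey
  have h3 := (ENNReal.continuous_rpow_const (y := (1/2:ℝ))).tendsto _ |>.comp hkey
  rw [ENNReal.zero_rpow_of_pos (by norm_num)] at h3
  refine h3.congr fun i => ?_
  rw [eLpNorm_eq_lintegral_rpow_enorm_toReal (by norm_num) (by norm_num)]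
  simp

/-- Let `S` be a `C₀`-semigroup on a real separable Hilbert space `H`
with infinitesimal generator `G`, `T ∈ (0,∞)`, and let `𝒮(t)` on `L²((0,T);H)` be the
induced family `(𝒮(t) v)(θ) = S(t)(v θ)` a.e.  For `v ∈ L²((0,T);H)`, the limit
`lim_{h↓0} h⁻¹(𝒮(h)v − v)` exists in `L²((0,T);H)` if and only if `v θ ∈ D(G)` for
a.e. `θ` and `θ ↦ G (v θ)` belongs to `L²((0,T);H)` (equivalently: there is
`w ∈ L²((0,T);H)` with `(v θ, w θ) ∈ graph G` a.e.); in that case the limit equals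
this function `w`. -/
theorem stmt4 {H : Type*} [NormedAddCommGroup H] [InnerProductSpace ℝ H]
    [CompleteSpace H] [SecondCountableTopology H]
    (T : ℝ) (hT : 0 < T)
    (S : ℝ → H →L[ℝ] H)
    (hS0 : S 0 = ContinuousLinearMap.id ℝ H)
    (hSadd : ∀ s t : ℝ, 0 ≤ s → 0 ≤ t → S (t + s) = (S t).comp (S s))
    (hScont : ∀ x : H, ContinuousOn (fun t => S t x) (Set.Ici 0))
    (G : H →ₗ.[ℝ] H)
    (hGdom : ∀ x : H, x ∈ G.domain ↔
      ∃ y : H, Tendsto (fun h : ℝ => h⁻¹ • (S h x - x)) (𝓝[>] 0) (𝓝 y))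
    (hGval : ∀ x : G.domain,
      Tendsto (fun h : ℝ => h⁻¹ • (S h (x : H) - (x : H))) (𝓝[>] 0) (𝓝 (G x)))
    (𝒮 : ℝ → (Lp H 2 (volume.restrict (Set.Ioo (0:ℝ) T)) →L[ℝ]
              Lp H 2 (volume.restrict (Set.Ioo (0:ℝ) T))))
    (h𝒮 : ∀ t : ℝ, 0 ≤ t → ∀ v,
      ((𝒮 t) v : ℝ → H) =ᵐ[volume.restrict (Set.Ioo (0:ℝ) T)]
        fun θ => S t ((v : ℝ → H) θ))
    (v : Lp H 2 (volume.restrict (Set.Ioo (0:ℝ) T))) :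
    ((∃ w, Tendsto (fun h : ℝ => h⁻¹ • (𝒮 h v - v)) (𝓝[>] 0) (𝓝 w)) ↔
      (∃ w : Lp H 2 (volume.restrict (Set.Ioo (0:ℝ) T)),
        ∀ᵐ θ ∂(volume.restrict (Set.Ioo (0:ℝ) T)),
          ((v : ℝ → H) θ, (w : ℝ → H) θ) ∈ G.graph)) ∧
    (∀ w : Lp H 2 (volume.restrict (Set.Ioo (0:ℝ) T)),
      (∀ᵐ θ ∂(volume.restrict (Set.Ioo (0:ℝ) T)),
        ((v : ℝ → H) θ, (w : ℝ → H) θ) ∈ G.graph) →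
      Tendsto (fun h : ℝ => h⁻¹ • (𝒮 h v - v)) (𝓝[>] 0) (𝓝 w)) := by
  obtain ⟨M, hM0, hM⟩ := semigroup_bound S hScont
  have hgraph : ∀ x y : H, (x, y) ∈ G.graph ↔
      Tendsto (fun h : ℝ => h⁻¹ • (S h x - x)) (𝓝[>] 0) (𝓝 y) := by
    intro x y
    rw [LinearPMap.mem_graph_iff]
    constructor
    · rintro ⟨z, rfl, rfl⟩
      exact hGval z
    · intro h
      exact ⟨⟨x, (hGdom x).2 ⟨y, h⟩⟩, rfl, tendsto_nhds_unique (hGval _) h⟩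
  have hquot : ∀ h : ℝ, 0 < h →
      ((h⁻¹ • (𝒮 h v - v) : Lp H 2 (volume.restrict (Set.Ioo (0:ℝ) T))) : ℝ → H)
        =ᵐ[volume.restrict (Set.Ioo (0:ℝ) T)]
      fun θ => h⁻¹ • (S h ((v : ℝ → H) θ) - (v : ℝ → H) θ) := by
    intro h hh
    filter_upwards [Lp.coeFn_smul h⁻¹ (𝒮 h v - v), Lp.coeFn_sub (𝒮 h v) v, h𝒮 h hh.le v]
      with θ h1 h2 h3
    rw [h1, Pi.smul_apply, h2, Pi.sub_apply, h3]
  have hback : ∀ w : Lp H 2 (volume.restrict (Set.Ioo (0:ℝ) T)),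
      (∀ᵐ θ ∂(volume.restrict (Set.Ioo (0:ℝ) T)),
        ((v : ℝ → H) θ, (w : ℝ → H) θ) ∈ G.graph) →
      Tendsto (fun h : ℝ => h⁻¹ • (𝒮 h v - v)) (𝓝[>] 0) (𝓝 w) := by
    intro w hw
    refine tendsto_Lp_two_of_dominated _ w
      (fun h θ => h⁻¹ • (S h ((v : ℝ → H) θ) - (v : ℝ → H) θ)) ?_ (M + 1) (by positivity) ?_ ?_
    · filter_upwards [self_mem_nhdsWithin] with h hh using hquot h hh
    · filter_upwards [Ioc_mem_nhdsGT (zero_lt_one' ℝ)] with h hh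
      filter_upwards [hw] with θ hθ
      have := norm_quotient_le S hS0 hSadd hScont M hM _ _ ((hgraph _ _).1 hθ) h hh
      refine (norm_sub_le _ _).trans ?_
      linarith
    · filter_upwards [hw] with θ hθ using (hgraph _ _).1 hθ
  refine ⟨⟨?_, fun ⟨w, hw⟩ => ⟨w, hback w hw⟩⟩, hback⟩
  rintro ⟨w, hw⟩
  refine ⟨w, ?_⟩
  obtain ⟨u, -, hu, hu0⟩ := exists_seq_strictAnti_tendsto (0:ℝ)
  have hu' : Tendsto u atTop (𝓝[>] 0) :=
    tendsto_nhdsWithin_iff.2 ⟨hu0, Eventually.of_forall hu⟩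
  obtain ⟨ns, hns, hae⟩ :=
    (tendstoInMeasure_of_tendsto_Lp (hw.comp hu')).exists_seq_tendsto_ae
  have hall : ∀ᵐ θ ∂(volume.restrict (Set.Ioo (0:ℝ) T)), ∀ n,
      ((((u n)⁻¹ • (𝒮 (u n) v - v) : Lp H 2 (volume.restrict (Set.Ioo (0:ℝ) T)))) : ℝ → H) θ =
      (u n)⁻¹ • (S (u n) ((v : ℝ → H) θ) - (v : ℝ → H) θ) :=
    ae_all_iff.2 fun n => hquot (u n) (hu n)
  filter_upwards [hae, hall] with θ h1 h2
  rw [hgraph]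
  refine tendsto_quotient_of_le S hS0 hSadd hScont (map (fun k => u (ns k)) atTop)
    (hu'.comp hns.tendsto_atTop) _ _ ?_
  rw [tendsto_map'_iff]
  exact h1.congr fun k => h2 (ns k)
end

section
/- Let H be a real separable Hilbert space, T ∈ (0,∞), B : H → H a bounded linear operator, and t ≥ 0. Define the operator 𝒦_t on L²((0,T);H) by (𝒦_t v)(θ) = B(v(θ−t)) for a.e. θ ∈ (t,T) and (𝒦_t v)(θ) = 0 for a.e. θ ∈ (0, min(t,T)]. Then 𝒦_t is a bounded linear operator on L²((0,T);H) whose operator norm satisfies ‖𝒦_t‖_{𝓛(L²((0,T);H))} = ‖B‖_{𝓛(H)} if 0 ≤ t < T, and 𝒦_t = 0 if t ≥ T. (Applied with B = S(t), this computes ‖𝒮(t)𝒯(t)‖ = ‖S(t)‖ for 0 ≤ t < T and 𝒮(t)𝒯(t) = 0 for t ≥ T, as in Proposition 3.2 of the paper.) -/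
/-!
Translation by `t` preserves Lebesgue measure and carries `(t, T)` onto `(0, T - t) ⊆ (0, T)`.
Hence `θ ↦ B (v (θ - t))` on `(t, T)` is well defined on a.e.-classes, and
`‖𝒦_t v‖² = ∫_{(0, T-t)} ‖B (v s)‖² ds ≤ ‖B‖² ‖v‖²`. For `t < T` the bound is sharp: `𝒦_t` sends
the constant `x` on `(0, T - t)` to the constant `B x` on `(t, T)`, an interval of the same positive
length, so `‖B x‖ ≤ ‖𝒦_t‖ ‖x‖`. For `T ≤ t` the interval `(t, T)` is empty.
-/

open MeasureTheory Filter Topology Set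

section Translation

variable {H : Type*} [NormedAddCommGroup H] [InnerProductSpace ℝ H]

theorem measurePreserving_shift (T t : ℝ) :
    MeasurePreserving (fun θ : ℝ => θ - t) (volume.restrict (Ioo t T))
      (volume.restrict (Ioo 0 (T - t))) := by
  have h := (measurePreserving_sub_right (volume : Measure ℝ) t).restrict_preimage
    (measurableSet_Ioo (a := (0 : ℝ)) (b := T - t))
  have e : (fun θ : ℝ => θ - t) ⁻¹' Ioo 0 (T - t) = Ioo t T := by
    ext θ; simp
  rwa [e] at h

theorem restrict_Ioo_restrict_Ioi (T t : ℝ) (ht : 0 ≤ t) :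
    (volume.restrict (Ioo (0 : ℝ) T)).restrict (Ioi t) = volume.restrict (Ioo t T) := by
  rw [Measure.restrict_restrict measurableSet_Ioi]
  congr 1
  ext θ
  simp only [mem_inter_iff, mem_Ioi, mem_Ioo]
  exact ⟨fun h => ⟨h.1, h.2.2⟩, fun h => ⟨h.1, ht.trans_lt h.1, h.2⟩⟩

theorem restrict_Ioo_sub_le (T t : ℝ) (ht : 0 ≤ t) :
    volume.restrict (Ioo (0 : ℝ) (T - t)) ≤ volume.restrict (Ioo (0 : ℝ) T) :=
  Measure.restrict_mono (Ioo_subset_Ioo_right (by linarith)) le_rfl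

/-- Null sets of `(0, T)` pull back to null sets under the shift; this is what makes the shifted
function independent of the representative. -/
theorem ae_shift {T t : ℝ} (ht : 0 ≤ t) {p : ℝ → Prop}
    (hp : ∀ᵐ s ∂volume.restrict (Ioo (0 : ℝ) T), p s) :
    ∀ᵐ θ ∂volume.restrict (Ioo (0 : ℝ) T), t < θ → p (θ - t) := by
  have h1 : ∀ᵐ s ∂volume.restrict (Ioo (0 : ℝ) (T - t)), p s :=
    ae_mono (restrict_Ioo_sub_le T t ht) hp
  have h2 := (measurePreserving_shift T t).quasiMeasurePreserving.ae h1
  rw [← restrict_Ioo_restrict_Ioi T t ht] at h2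
  exact (ae_restrict_iff' measurableSet_Ioi).1 h2

/-- The function `𝒦_t v`: the image under `B` of `v` delayed by `t`, and zero up to time `t`. -/
noncomputable def shiftFun (B : H →L[ℝ] H) (t : ℝ) (v : ℝ → H) : ℝ → H :=
  fun θ => if t < θ then B (v (θ - t)) else 0

theorem shiftFun_eq_indicator (B : H →L[ℝ] H) (t : ℝ) (v : ℝ → H) :
    shiftFun B t v = (Ioi t).indicator ((fun s => B (v s)) ∘ fun θ => θ - t) := by
  ext θ
  simp [shiftFun, indicator_apply]

theorem shiftFun_congr {T t : ℝ} (ht : 0 ≤ t) (B : H →L[ℝ] H) {v w : ℝ → H}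
    (h : v =ᵐ[volume.restrict (Ioo (0 : ℝ) T)] w) :
    shiftFun B t v =ᵐ[volume.restrict (Ioo (0 : ℝ) T)] shiftFun B t w := by
  filter_upwards [ae_shift ht h] with θ hθ
  by_cases hc : t < θ
  · simp [shiftFun, hc, hθ hc]
  · simp [shiftFun, hc]

theorem memLp_shiftFun {T t : ℝ} (ht : 0 ≤ t) (B : H →L[ℝ] H) {v : ℝ → H}
    (hv : MemLp v 2 (volume.restrict (Ioo (0 : ℝ) T))) :
    MemLp (shiftFun B t v) 2 (volume.restrict (Ioo (0 : ℝ) T)) := by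
  rw [shiftFun_eq_indicator, memLp_indicator_iff_restrict measurableSet_Ioi,
    restrict_Ioo_restrict_Ioi T t ht]
  exact ((B.comp_memLp' hv).mono_measure
    (restrict_Ioo_sub_le T t ht)).comp_measurePreserving (measurePreserving_shift T t)

theorem eLpNorm_shiftFun_le {T t : ℝ} (ht : 0 ≤ t) (B : H →L[ℝ] H) {v : ℝ → H}
    (hv : MemLp v 2 (volume.restrict (Ioo (0 : ℝ) T))) :
    eLpNorm (shiftFun B t v) 2 (volume.restrict (Ioo (0 : ℝ) T)) ≤
      ENNReal.ofReal ‖B‖ * eLpNorm v 2 (volume.restrict (Ioo (0 : ℝ) T)) := by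
  have hB : MemLp (fun s => B (v s)) 2 (volume.restrict (Ioo (0 : ℝ) T)) := B.comp_memLp' hv
  rw [shiftFun_eq_indicator, eLpNorm_indicator_eq_eLpNorm_restrict measurableSet_Ioi,
    restrict_Ioo_restrict_Ioi T t ht,
    eLpNorm_comp_measurePreserving
      (hB.mono_measure (restrict_Ioo_sub_le T t ht)).aestronglyMeasurable
      (measurePreserving_shift T t)]
  refine (eLpNorm_mono_measure _ (restrict_Ioo_sub_le T t ht)).trans ?_
  exact eLpNorm_le_mul_eLpNorm_of_ae_le_mul (ae_of_all _ fun s => B.le_opNorm (v s)) 2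

/-- The operator `𝒦_t` on `L²((0,T);H)`. -/
noncomputable def shiftOp (T : ℝ) {t : ℝ} (ht : 0 ≤ t) (B : H →L[ℝ] H) :
    Lp H 2 (volume.restrict (Ioo (0 : ℝ) T)) →L[ℝ] Lp H 2 (volume.restrict (Ioo (0 : ℝ) T)) :=
  LinearMap.mkContinuous
    { toFun := fun v => (memLp_shiftFun ht B (Lp.memLp v)).toLp _
      map_add' := fun v w => by
        rw [← MemLp.toLp_add, MemLp.toLp_eq_toLp_iff]
        refine (shiftFun_congr ht B (Lp.coeFn_add v w)).trans (ae_of_all _ fun θ => ?_)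
        by_cases hc : t < θ <;> simp [shiftFun, hc]
      map_smul' := fun c v => by
        rw [← MemLp.toLp_const_smul, MemLp.toLp_eq_toLp_iff]
        refine (shiftFun_congr ht B (Lp.coeFn_smul c v)).trans (ae_of_all _ fun θ => ?_)
        by_cases hc : t < θ <;> simp [shiftFun, hc] }
    ‖B‖ (fun v => by
      have h := ENNReal.toReal_mono
        (ENNReal.mul_ne_top ENNReal.ofReal_ne_top (Lp.eLpNorm_ne_top v))
        (eLpNorm_shiftFun_le ht B (Lp.memLp v))
      rw [ENNReal.toReal_mul, ENNReal.toReal_ofReal (norm_nonneg _)] at h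
      rw [Lp.norm_def v]
      exact (Lp.norm_toLp _ (memLp_shiftFun ht B (Lp.memLp v))).trans_le h)

theorem shiftOp_coeFn (T : ℝ) {t : ℝ} (ht : 0 ≤ t) (B : H →L[ℝ] H)
    (v : Lp H 2 (volume.restrict (Ioo (0 : ℝ) T))) :
    (shiftOp T ht B v : ℝ → H) =ᵐ[volume.restrict (Ioo (0 : ℝ) T)] shiftFun B t v :=
  MemLp.coeFn_toLp (memLp_shiftFun ht B (Lp.memLp v))

/-- The lower bound: `𝒦_t` maps the constant `x` on `(0, T - t)` to the constant `B x` on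
`(t, T)`. -/
theorem norm_le_norm_shiftOp {T t : ℝ} (ht : 0 ≤ t) (htT : t < T) (B : H →L[ℝ] H) :
    ‖B‖ ≤ ‖shiftOp T ht B‖ := by
  refine B.opNorm_le_bound (shiftOp T ht B).opNorm_nonneg fun x => ?_
  set μ := volume.restrict (Ioo (0 : ℝ) T) with hμ
  let v : Lp H 2 μ := indicatorConstLp 2 (measurableSet_Ioo (a := (0 : ℝ)) (b := T - t))
    (measure_ne_top μ _) x
  let w : Lp H 2 μ := indicatorConstLp 2 (measurableSet_Ioo (a := t) (b := T))
    (measure_ne_top μ _) (B x)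
  have hKv : shiftOp T ht B v = w := by
    apply Lp.ext
    have hv : (v : ℝ → H) =ᵐ[μ] (Ioo 0 (T - t)).indicator fun _ => x := indicatorConstLp_coeFn
    have hw : (w : ℝ → H) =ᵐ[μ] (Ioo t T).indicator fun _ => B x := indicatorConstLp_coeFn
    refine ((shiftOp_coeFn T ht B v).trans (shiftFun_congr ht B hv)).trans (.trans ?_ hw.symm)
    refine ae_of_all _ fun θ => ?_
    by_cases h1 : t < θ <;> by_cases h2 : θ < T <;> simp [shiftFun, h1, h2]
  have m1 : μ.real (Ioo 0 (T - t)) = T - t := by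
    rw [hμ, measureReal_restrict_apply measurableSet_Ioo,
      inter_eq_left.2 (Ioo_subset_Ioo_right (by linarith)),
      Real.volume_real_Ioo_of_le (by linarith), sub_zero]
  have m2 : μ.real (Ioo t T) = T - t := by
    rw [hμ, measureReal_restrict_apply measurableSet_Ioo,
      inter_eq_left.2 (Ioo_subset_Ioo_left ht), Real.volume_real_Ioo_of_le htT.le]
  have nv : ‖v‖ = ‖x‖ * (T - t) ^ (1 / (2 : ENNReal).toReal) := by
    rw [norm_indicatorConstLp (by simp) (by simp), m1]
  have nw : ‖w‖ = ‖B x‖ * (T - t) ^ (1 / (2 : ENNReal).toReal) := by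
    rw [norm_indicatorConstLp (by simp) (by simp), m2]
  have h := (shiftOp T ht B).le_opNorm v
  rw [hKv, nv, nw, ← mul_assoc] at h
  exact le_of_mul_le_mul_right h (Real.rpow_pos_of_pos (sub_pos.2 htT) _)

end Translation

/-- Let `H` be a real separable Hilbert space, `T ∈ (0,∞)`,
`B : H → H` bounded linear and `t ≥ 0`.  The operator `𝒦_t` on `L²((0,T);H)` defined
a.e. by `(𝒦_t v)(θ) = B (v (θ − t))` for `θ ∈ (t,T)` and `0` for `θ ∈ (0, min(t,T)]`
is a bounded linear operator with `‖𝒦_t‖ = ‖B‖` if `0 ≤ t < T`, and `𝒦_t = 0`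
if `t ≥ T`. -/
theorem stmt9 {H : Type*} [NormedAddCommGroup H] [InnerProductSpace ℝ H]
    [CompleteSpace H] [SecondCountableTopology H]
    (T : ℝ) (hT : 0 < T) (B : H →L[ℝ] H) (t : ℝ) (ht : 0 ≤ t) :
    ∃ K : Lp H 2 (volume.restrict (Set.Ioo (0:ℝ) T)) →L[ℝ]
          Lp H 2 (volume.restrict (Set.Ioo (0:ℝ) T)),
      (∀ v, (K v : ℝ → H) =ᵐ[volume.restrict (Set.Ioo (0:ℝ) T)]
          fun θ => if t < θ then B ((v : ℝ → H) (θ - t)) else 0) ∧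
      (t < T → ‖K‖ = ‖B‖) ∧
      (T ≤ t → K = 0) := by
  refine ⟨shiftOp T ht B, shiftOp_coeFn T ht B, fun htT => ?_, fun hTt => ?_⟩
  · exact le_antisymm (LinearMap.mkContinuous_norm_le _ (norm_nonneg _) _)
      (norm_le_norm_shiftOp ht htT B)
  · ext1 v
    apply Lp.ext
    refine (shiftOp_coeFn T ht B v).trans (.trans ?_ (Lp.coeFn_zero _ _ _).symm)
    filter_upwards [ae_restrict_mem measurableSet_Ioo] with θ hθ
    simp [shiftFun, (hθ.2.trans_le hTt).le]
end

section
/- Let S be a C₀-semigroup on a real separable Hilbert space H, T ∈ (0,∞), γ ∈ (1/2, ∞), and f ∈ L²((0,T);H). For s ≥ 0 let 𝒮(s)𝒯(s)f ∈ L²((0,T);H) be given by (𝒮(s)𝒯(s)f)(θ) = S(s)(f(θ−s)) for a.e. θ ∈ (s,T) and 0 for a.e. θ ∈ (0, min(s,T)]. Then the L²((0,T);H)-valued map s ↦ s^{γ−1}·(𝒮(s)𝒯(s)f) is Bochner integrable on (0,∞) (it vanishes identically for s ≥ T), and the element Γ(γ)⁻¹ ∫_0^∞ s^{γ−1} (𝒮(s)𝒯(s)f)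 ds of L²((0,T);H) coincides, for a.e. t ∈ (0,T), with the pointwise fractional convolution Γ(γ)⁻¹ ∫_0^t (t−s)^{γ−1} S(t−s)(f(s)) ds. -/
open MeasureTheory Filter Topology Set

/-!
The family `F s = 𝒮(s)𝒯(s) f` is represented by a single jointly measurable kernel
`K(s, θ) = 1_{s < θ} S(s) g(θ - s)`, where `g` is the extension of `f` by zero outside `(0, T)`
(`semigroupKernel`). Joint measurability holds because `(s, x) ↦ S(s) x` is continuous in each
variable separately.

*Integrability.* The space `L²((0,T);H)` is separable, so `s ↦ F s` is strongly measurable once all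
its distances to fixed elements are measurable, and these are square roots of integrals of the
kernel, to which Tonelli's theorem applies (`stronglyMeasurable_Lp_of_kernel`). By the uniform
boundedness principle `‖S s‖ ≤ M` on `[0, T]`, hence `‖F s‖ ≤ M ‖f‖` there, while `F s = 0` for
`s > T`; so `s ^ (γ - 1) • F s` is dominated by a multiple of `s ^ (γ - 1)` on `(0, T]`, which is
integrable since `γ > 0`.

*Identification.* An `L²`-valued Bochner integral is computed pointwise from a jointly measurable
kernel (`coeFn_integral_Lp`): both sides have the same integral over every measurable set, by
pairing with indicator functions and using Fubini's theorem. The substitution `u = t - s` then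
turns `∫ s ^ (γ - 1) K(s, t) ds` into the convolution.
-/

/-- In a second countable space the open balls generate the Borel σ-algebra, so measurability can be
tested on distances to fixed points. -/
theorem measurable_of_measurable_dist {α E : Type*} [MeasurableSpace α] [PseudoMetricSpace E]
    [SecondCountableTopology E] [MeasurableSpace E] [BorelSpace E] {F : α → E}
    (h : ∀ v, Measurable fun a => dist (F a) v) : Measurable F := by
  have hb : TopologicalSpace.IsTopologicalBasis
      {u : Set E | ∃ v : E, ∃ r : ℝ, u = Metric.ball v r} := by
    refine TopologicalSpace.isTopologicalBasis_of_isOpen_of_nhds ?_ ?_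
    · rintro u ⟨v, r, rfl⟩
      exact Metric.isOpen_ball
    · intro a u ha hu
      obtain ⟨ε, hε, hsub⟩ := Metric.isOpen_iff.1 hu a ha
      exact ⟨_, ⟨a, ε, rfl⟩, Metric.mem_ball_self hε, hsub⟩
  rw [BorelSpace.measurable_eq (α := E), hb.borel_eq_generateFrom]
  refine measurable_generateFrom ?_
  rintro u ⟨v, r, rfl⟩
  exact measurableSet_lt (h v) measurable_const

/-- A family in `L²` with a jointly measurable kernel is strongly measurable: its distance to any
fixed element is a parametric Lebesgue integral. -/
theorem stronglyMeasurable_Lp_of_kernel {α H : Type*} [MeasurableSpace α]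
    [NormedAddCommGroup H] [InnerProductSpace ℝ H] [SecondCountableTopology H]
    {μ : Measure ℝ} [IsFiniteMeasure μ] {F : α → Lp H 2 μ} {K : α → ℝ → H}
    (hK : StronglyMeasurable (Function.uncurry K)) (hFK : ∀ a, F a =ᵐ[μ] K a) :
    StronglyMeasurable F := by
  -- this instance gives separability of `Lp H 2 μ`
  have : Fact ((2 : ENNReal) ≠ ⊤) := ⟨by simp⟩
  borelize ↥(Lp H 2 μ)
  refine Measurable.stronglyMeasurable (measurable_of_measurable_dist fun v => ?_)
  have hd : ∀ a, dist (F a) v =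
      ((∫⁻ θ, ‖K a θ - v θ‖ₑ ^ (2 : ℝ) ∂μ) ^ (1 / 2 : ℝ)).toReal := by
    intro a
    have h1 : (F a : ℝ → H) - (v : ℝ → H) =ᵐ[μ] fun θ => K a θ - v θ := by
      filter_upwards [hFK a] with θ h
      simp [h]
    rw [Lp.dist_def, eLpNorm_congr_ae h1, eLpNorm_eq_lintegral_rpow_enorm_toReal (by simp) (by simp)]
    simp
  simp_rw [hd]
  have hm : Measurable fun p : α × ℝ => ‖K p.1 p.2 - v p.2‖ₑ ^ (2 : ℝ) :=
    ((hK.sub ((Lp.stronglyMeasurable v).comp_measurable measurable_snd)).enorm).pow_const _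
  exact ((hm.lintegral_prod_right' (ν := μ)).pow_const _).ennreal_toReal

/-- The Bochner integral of an `L²`-valued function is given pointwise a.e. by integrating a jointly
measurable kernel. Finiteness of `μ` embeds `L²` in `L¹`, which makes the kernel integrable on the
product and Fubini's theorem available. -/
theorem coeFn_integral_Lp {α H : Type*} [MeasurableSpace α]
    [NormedAddCommGroup H] [InnerProductSpace ℝ H] [CompleteSpace H]
    {ν : Measure α} [SFinite ν] {μ : Measure ℝ} [IsFiniteMeasure μ]
    {F : α → Lp H 2 μ} (hF : Integrable F ν) {K : α → ℝ → H}
    (hK : AEStronglyMeasurable (Function.uncurry K) (ν.prod μ))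
    (hFK : ∀ᵐ a ∂ν, F a =ᵐ[μ] K a) :
    ((∫ a, F a ∂ν : Lp H 2 μ) : ℝ → H) =ᵐ[μ] fun θ => ∫ a, K a θ ∂ν := by
  have hint : ∀ u : Lp H 2 μ, Integrable u μ := fun u =>
    (Lp.memLp u).integrable (by norm_num)
  -- Cauchy–Schwarz: the `L¹` norm is controlled by the `L²` norm
  have hbound : ∀ u : Lp H 2 μ, ∫ θ, ‖u θ‖ ∂μ ≤ ‖u‖ * (μ univ ^ (1 / 2 : ℝ)).toReal := by
    intro u
    rw [integral_norm_eq_lintegral_enorm (hint u).1, ← eLpNorm_one_eq_lintegral_enorm, Lp.norm_def,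
      ← ENNReal.toReal_mul]
    have h := eLpNorm_le_eLpNorm_mul_rpow_measure_univ (μ := μ) (p := 1) (q := 2) (f := u)
      (by norm_num) (hint u).1
    norm_num only [ENNReal.toReal_one, ENNReal.toReal_ofNat] at h
    refine ENNReal.toReal_mono ?_ h
    exact ENNReal.mul_ne_top (Lp.eLpNorm_ne_top u) (by finiteness)
  have hKint : Integrable (Function.uncurry K) (ν.prod μ) := by
    rw [integrable_prod_iff hK]
    constructor
    · filter_upwards [hFK] with a ha
      exact (hint (F a)).congr ha
    · refine (hF.norm.mul_const ((μ univ ^ (1 / 2 : ℝ)).toReal)).mono'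
        hK.norm.integral_prod_right' ?_
      filter_upwards [hFK] with a ha
      rw [Real.norm_of_nonneg (integral_nonneg fun _ => norm_nonneg _)]
      refine le_trans (le_of_eq (integral_congr_ae ?_)) (hbound (F a))
      filter_upwards [ha] with θ hθ
      simp [Function.uncurry, hθ]
  refine Integrable.ae_eq_of_forall_setIntegral_eq _ _ (hint _) hKint.integral_prod_right ?_
  intro A hA hμA
  have hKA : Integrable (Function.uncurry K) (ν.prod (μ.restrict A)) := by
    have := hKint.restrict (s := univ ×ˢ A)
    rwa [← Measure.prod_restrict, Measure.restrict_univ] at this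
  rw [← integral_integral_swap hKA]
  -- `u ↦ ⟪c, ∫ θ in A, u θ⟫` is the inner product with `1_A c`, so it passes under the integral
  refine ext_inner_left ℝ fun c => ?_
  rw [← L2.inner_indicatorConstLp_eq_inner_setIntegral ℝ hA hμA.ne, ← integral_inner hF,
    ← integral_inner (f := fun a => ∫ θ in A, K a θ ∂μ) hKA.integral_prod_left]
  refine integral_congr_ae ?_
  filter_upwards [hFK] with a ha
  rw [L2.inner_indicatorConstLp_eq_inner_setIntegral ℝ hA hμA.ne,
    integral_congr_ae (ae_restrict_of_ae ha)]

/-- Strong continuity and the uniform boundedness principle bound `‖S s‖` on compact intervals. -/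
theorem exists_opNorm_bound {H : Type*} [NormedAddCommGroup H] [NormedSpace ℝ H] [CompleteSpace H]
    {S : ℝ → H →L[ℝ] H} (hScont : ∀ x : H, ContinuousOn (fun t => S t x) (Ici 0)) (T : ℝ) :
    ∃ M : ℝ, ∀ s ∈ Icc 0 T, ‖S s‖ ≤ M := by
  obtain ⟨M, hM⟩ := banach_steinhaus (g := fun s : Icc 0 T => S s) (by
    intro x
    obtain ⟨C, hC⟩ := isCompact_Icc.exists_bound_of_continuousOn
      ((hScont x).mono (Icc_subset_Ici_self : Icc 0 T ⊆ _))
    exact ⟨C, fun i => hC i i.2⟩)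
  exact ⟨M, fun s hs => hM ⟨s, hs⟩⟩

/-- The kernel `(s, θ) ↦ S(s) g(θ - s)` for `s < θ`, and `0` otherwise. The time `s` is replaced by
`max s 0`, since `S` is only controlled at nonnegative times and joint measurability on all of
`ℝ × ℝ` is needed. -/
noncomputable def semigroupKernel {H : Type*} [NormedAddCommGroup H] [NormedSpace ℝ H]
    (S : ℝ → H →L[ℝ] H) (g : ℝ → H) (s θ : ℝ) : H :=
  if max s 0 < θ then S (max s 0) (g (θ - max s 0)) else 0

theorem stronglyMeasurable_semigroupKernel {H : Type*} [NormedAddCommGroup H] [NormedSpace ℝ H]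
    [SecondCountableTopology H]
    {S : ℝ → H →L[ℝ] H} (hScont : ∀ x : H, ContinuousOn (fun t => S t x) (Ici 0))
    {g : ℝ → H} (hg : StronglyMeasurable g) :
    StronglyMeasurable (Function.uncurry (semigroupKernel S g)) := by
  borelize H
  have h1 : StronglyMeasurable (Function.uncurry fun (s : ℝ) (x : H) => S (max s 0) x) := by
    refine stronglyMeasurable_uncurry_of_continuous_of_stronglyMeasurable (fun x => ?_) fun s =>
      (S (max s 0)).continuous.stronglyMeasurable
    exact (hScont x).comp_continuous (by fun_prop) fun s => le_max_right s 0
  have h2 : Measurable fun p : ℝ × ℝ => (p.1, g (p.2 - max p.1 0)) :=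
    measurable_fst.prodMk (hg.measurable.comp (by fun_prop))
  exact StronglyMeasurable.ite (measurableSet_lt (by fun_prop) measurable_snd)
    (h1.comp_measurable h2) stronglyMeasurable_const

theorem eLpNorm_comp_sub_right {H : Type*} [NormedAddCommGroup H] {g : ℝ → H}
    (hg : StronglyMeasurable g) (s : ℝ) :
    eLpNorm (fun θ => g (θ - s)) 2 volume = eLpNorm g 2 volume :=
  eLpNorm_comp_measurePreserving (f := fun θ => θ - s) hg.aestronglyMeasurable
    (measurePreserving_sub_right volume s)

/-- Let `S` be a `C₀`-semigroup on a real separable Hilbert space `H`,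
`T ∈ (0,∞)`, `γ ∈ (1/2,∞)` and `f ∈ L²((0,T);H)`.  Let `F s = 𝒮(s)𝒯(s) f`, i.e.
`(F s)(θ) = S(s)(f (θ − s))` for a.e. `θ ∈ (s,T)` and `0` for a.e. `θ ∈ (0, min(s,T)]`.
Then the `L²((0,T);H)`-valued map `s ↦ s^{γ−1} • F s` is Bochner integrable on `(0,∞)`,
and `Γ(γ)⁻¹ ∫_0^∞ s^{γ−1} F s ds` coincides a.e. on `(0,T)` with the pointwise
fractional convolution `t ↦ Γ(γ)⁻¹ ∫_0^t (t−s)^{γ−1} S(t−s)(f s) ds`. -/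
theorem stmt11 {H : Type*} [NormedAddCommGroup H] [InnerProductSpace ℝ H]
    [CompleteSpace H] [SecondCountableTopology H]
    (T : ℝ) (hT : 0 < T)
    (S : ℝ → H →L[ℝ] H)
    (hS0 : S 0 = ContinuousLinearMap.id ℝ H)
    (hSadd : ∀ s t : ℝ, 0 ≤ s → 0 ≤ t → S (t + s) = (S t).comp (S s))
    (hScont : ∀ x : H, ContinuousOn (fun t => S t x) (Set.Ici 0))
    (γ : ℝ) (hγ : 1 / 2 < γ)
    (f : Lp H 2 (volume.restrict (Set.Ioo (0:ℝ) T)))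
    (F : ℝ → Lp H 2 (volume.restrict (Set.Ioo (0:ℝ) T)))
    (hF : ∀ s : ℝ, 0 ≤ s →
      (F s : ℝ → H) =ᵐ[volume.restrict (Set.Ioo (0:ℝ) T)]
        fun θ => if s < θ then S s ((f : ℝ → H) (θ - s)) else 0) :
    IntegrableOn (fun s : ℝ => s ^ (γ - 1) • F s) (Set.Ioi 0) volume ∧
    (((Real.Gamma γ)⁻¹ • ∫ s in Set.Ioi (0:ℝ), s ^ (γ - 1) • F s) : ℝ → H)
      =ᵐ[volume.restrict (Set.Ioo (0:ℝ) T)]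
      fun t => (Real.Gamma γ)⁻¹ •
        ∫ s in Set.Ioo (0:ℝ) t, (t - s) ^ (γ - 1) • S (t - s) ((f : ℝ → H) s) := by
  obtain ⟨M, hM⟩ := exists_opNorm_bound hScont T
  set g : ℝ → H := (Ioo (0:ℝ) T).indicator f with hg_def
  have hg : StronglyMeasurable g := (Lp.stronglyMeasurable f).indicator measurableSet_Ioo
  have hgf : ∀ x ∈ Ioo (0:ℝ) T, g x = f x := fun x hx => indicator_of_mem hx _
  have hFK : ∀ s : ℝ, F (max s 0) =ᵐ[volume.restrict (Ioo (0:ℝ) T)] semigroupKernel S g s := by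
    intro s
    filter_upwards [hF (max s 0) (le_max_right _ _), ae_restrict_mem measurableSet_Ioo]
      with θ h hθ
    rw [h, semigroupKernel]
    split_ifs with hs
    · rw [hgf _ ⟨by linarith, by linarith [hθ.2, le_max_right s 0]⟩]
    · rfl
  have hKm := stronglyMeasurable_semigroupKernel hScont hg
  have hFm : StronglyMeasurable fun s => F (max s 0) := stronglyMeasurable_Lp_of_kernel hKm hFK
  have hgnorm : eLpNorm g 2 volume = eLpNorm f 2 (volume.restrict (Ioo (0:ℝ) T)) :=
    eLpNorm_indicator_eq_eLpNorm_restrict measurableSet_Ioo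
  have hnorm : ∀ s ∈ Icc (0:ℝ) T, ‖F s‖ ≤ M * ‖f‖ := by
    intro s hs
    have hM0 : 0 ≤ M := (norm_nonneg _).trans (hM s hs)
    have h1 : eLpNorm (F s) 2 (volume.restrict (Ioo (0:ℝ) T)) ≤ ENNReal.ofReal M * eLpNorm (fun θ => g (θ - s)) 2 (volume.restrict (Ioo (0:ℝ) T)) := by
      refine eLpNorm_le_mul_eLpNorm_of_ae_le_mul ?_ _
      filter_upwards [hF s hs.1, ae_restrict_mem measurableSet_Ioo] with θ h hθ
      rw [h]
      split_ifs with hlt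
      · rw [hgf _ ⟨by linarith, by linarith [hθ.2, hs.1]⟩]
        exact (S s).le_of_opNorm_le (hM s hs) _
      · simp only [norm_zero]; positivity
    -- translation invariance on `ℝ`, using that `g` vanishes off `(0, T)`:
    -- the shift by `s` cannot increase the norm on `(0, T)`
    have h2 : eLpNorm (fun θ => g (θ - s)) 2 (volume.restrict (Ioo (0:ℝ) T)) ≤ eLpNorm f 2 (volume.restrict (Ioo (0:ℝ) T)) :=
      calc eLpNorm (fun θ => g (θ - s)) 2 (volume.restrict (Ioo (0:ℝ) T))
          ≤ eLpNorm (fun θ => g (θ - s)) 2 volume := eLpNorm_restrict_le _ _ _ _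
        _ = eLpNorm g 2 volume :=
          eLpNorm_comp_sub_right hg s
        _ = eLpNorm f 2 (volume.restrict (Ioo (0:ℝ) T)) := hgnorm
    rw [Lp.norm_def, Lp.norm_def, ← ENNReal.toReal_ofReal hM0, ← ENNReal.toReal_mul]
    exact ENNReal.toReal_mono (ENNReal.mul_ne_top ENNReal.ofReal_ne_top (Lp.eLpNorm_ne_top f))
      (h1.trans (by gcongr))
  have hzero : ∀ s, T < s → F s = 0 := by
    intro s hs
    rw [Lp.eq_zero_iff_ae_eq_zero]
    filter_upwards [hF s (hT.le.trans hs.le), ae_restrict_mem measurableSet_Ioo] with θ h hθ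
    rw [h, if_neg (by linarith [hθ.2])]
    rfl
  have hmax : ∀ s ∈ Ioi (0:ℝ), max s 0 = s := fun s hs => max_eq_left (le_of_lt hs)
  have hrpow : Measurable fun s : ℝ => s ^ (γ - 1) := measurable_id.pow_const _
  have hint : IntegrableOn (fun s : ℝ => s ^ (γ - 1) • F s) (Ioi 0) volume := by
    have hb : Integrable ((Ioc 0 T).indicator fun s : ℝ => s ^ (γ - 1) * (M * ‖f‖)) := by
      refine IntegrableOn.integrable_indicator ?_ measurableSet_Ioc
      have := (intervalIntegral.intervalIntegrable_rpow' (a := 0) (b := T) (r := γ - 1)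
        (by linarith)).1
      exact this.mul_const _
    refine hb.integrableOn.mono' ?_ ?_
    · refine (hrpow.stronglyMeasurable.smul hFm).aestronglyMeasurable.congr ?_
      filter_upwards [ae_restrict_mem measurableSet_Ioi] with s hs
      change s ^ (γ - 1) • F (max s 0) = s ^ (γ - 1) • F s
      rw [hmax s hs]
    · filter_upwards [ae_restrict_mem measurableSet_Ioi] with s hs
      by_cases hsT : s ≤ T
      · rw [indicator_of_mem (show s ∈ Ioc 0 T from ⟨hs, hsT⟩), norm_smul,
          Real.norm_of_nonneg (Real.rpow_nonneg (le_of_lt hs) _)]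
        exact mul_le_mul_of_nonneg_left (hnorm s ⟨le_of_lt hs, hsT⟩)
          (Real.rpow_nonneg (le_of_lt hs) _)
      · rw [hzero s (not_le.1 hsT), indicator_of_notMem fun h => hsT h.2]
        simp
  refine ⟨hint, ?_⟩
  have hpt := coeFn_integral_Lp hint (K := fun s θ => s ^ (γ - 1) • semigroupKernel S g s θ)
    (((hrpow.comp measurable_fst).stronglyMeasurable.smul hKm).aestronglyMeasurable) (by
      filter_upwards [ae_restrict_mem measurableSet_Ioi] with s hs
      filter_upwards [hFK s, Lp.coeFn_smul (s ^ (γ - 1)) (F s)] with θ h1 h2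
      rw [h2, Pi.smul_apply, ← h1, hmax s hs])
  filter_upwards [hpt, ae_restrict_mem measurableSet_Ioo] with t h ht
  rw [Pi.smul_apply, h]
  congr 1
  -- substitute `s = t - u` after extending both integrands by zero to all of `ℝ`
  rw [← integral_indicator measurableSet_Ioi, ← integral_indicator measurableSet_Ioo,
    ← integral_sub_left_eq_self _ volume t]
  refine integral_congr_ae (Eventually.of_forall fun u => ?_)
  beta_reduce
  by_cases hu' : u ∈ Ioo 0 t
  · have h0 : t - u ∈ Ioi (0:ℝ) := by simpa using hu'.2
    rw [indicator_of_mem hu', indicator_of_mem h0, semigroupKernel, hmax _ h0,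
      if_pos (by linarith [hu'.1]), sub_sub_cancel, hgf u ⟨hu'.1, hu'.2.trans ht.2⟩]
  · rw [indicator_of_notMem hu']
    by_cases h0 : t - u ∈ Ioi (0:ℝ)
    · rw [indicator_of_mem h0, semigroupKernel, hmax _ h0, if_neg, smul_zero]
      intro hlt
      exact hu' ⟨by linarith, by simpa using h0⟩
    · rw [indicator_of_notMem h0]
end

section
/- Let S be a C₀-semigroup on a real separable Hilbert space H such that S(t) is self-adjoint for every t ≥ 0, let Q : H → H be a bounded linear operator with Q∘S(t) = S(t)∘Q for all t ≥ 0, and let γ ∈ (1/2, ∞). Then for every t ≥ 0 both 𝓛(H)-valued Bochner integrals below exist and ∫_0^t (t−r)^{2γ−2} · S(t−r)∘Q∘S(t−r) dr = 2^{1−2γ} · ∫_0^{2t} u^{2γ−2} · Q∘S(u) du. -/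
/-!
The semigroup law and `Q ∘ S(t) = S(t) ∘ Q` give `S(t-r) ∘ Q ∘ S(t-r) = Q ∘ S(2(t-r))`, so the
identity is the substitution `u = 2(t-r)`.  Since `2γ-2 > -1` and `S` is bounded on compact
intervals (Banach–Steinhaus), what remains is strong measurability of `u ↦ S(u)` for the operator
norm, which strong continuity alone does not provide.  Self-adjointness yields more: `S` is
norm-continuous on `(0,∞)` (`continuousOn_norm_of_selfAdjoint`).

The norm continuity needs no spectral theorem.  The function `φ(t) = ⟪S(t)x, x⟫` satisfies
`φ(2τ+2h) - 2φ(2τ+h) + φ(2τ) = ‖S(τ)(S(h)x - x)‖²`.  Summing over `2τ = kh`, `k < n`, the left-hand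
sides telescope to a bounded quantity, while for `nh ≤ 2a` each right-hand side controls
`‖S(a)(S(h)x - x)‖²`.  Hence `n ‖S(a+h) - S(a)‖²` is bounded as long as `nh ≤ 2a`
(`mul_norm_sub_sq_le`), and `n` may be taken large when `h` is small.
-/

open MeasureTheory Filter Topology Set
open scoped RealInnerProductSpace

section Aux

variable {H : Type*} [NormedAddCommGroup H] [InnerProductSpace ℝ H]

lemma inner_semigroup (S : ℝ → H →L[ℝ] H)
    (hSadd : ∀ s t : ℝ, 0 ≤ s → 0 ≤ t → S (t + s) = (S t).comp (S s))
    (hSsa : ∀ t : ℝ, 0 ≤ t → ∀ x y : H, ⟪S t x, y⟫ = ⟪x, S t y⟫)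
    {a b : ℝ} (ha : 0 ≤ a) (hb : 0 ≤ b) (x : H) :
    ⟪S a x, S b x⟫ = ⟪S (a + b) x, x⟫ := by
  rw [← hSsa b hb, add_comm a b, hSadd a b ha hb]
  rfl

/-- The second difference of `t ↦ ⟪S(t)x, x⟫` is a square. -/
lemma second_difference (S : ℝ → H →L[ℝ] H)
    (hSadd : ∀ s t : ℝ, 0 ≤ s → 0 ≤ t → S (t + s) = (S t).comp (S s))
    (hSsa : ∀ t : ℝ, 0 ≤ t → ∀ x y : H, ⟪S t x, y⟫ = ⟪x, S t y⟫)
    {τ h : ℝ} (hτ : 0 ≤ τ) (hh : 0 ≤ h) (x : H) :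
    ‖S (τ + h) x - S τ x‖ ^ 2 =
      ⟪S (2 * τ + 2 * h) x, x⟫ - 2 * ⟪S (2 * τ + h) x, x⟫ + ⟪S (2 * τ) x, x⟫ := by
  rw [norm_sub_sq_real, ← real_inner_self_eq_norm_sq, ← real_inner_self_eq_norm_sq,
    inner_semigroup S hSadd hSsa (by positivity) (by positivity),
    inner_semigroup S hSadd hSsa (by positivity) (by positivity),
    inner_semigroup S hSadd hSsa (by positivity) (by positivity)]
  ring_nf

/-- Quantitative norm continuity: each of the `n` second differences with `2τ = kh`, `k < n`,
dominates `‖(S(a+h) - S(a))x‖² / M²` since `kh/2 ≤ a`, and their sum telescopes. -/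
lemma mul_norm_sub_sq_le (S : ℝ → H →L[ℝ] H)
    (hSadd : ∀ s t : ℝ, 0 ≤ s → 0 ≤ t → S (t + s) = (S t).comp (S s))
    (hSsa : ∀ t : ℝ, 0 ≤ t → ∀ x y : H, ⟪S t x, y⟫ = ⟪x, S t y⟫)
    {M T : ℝ} (hM : ∀ t ∈ Icc 0 T, ‖S t‖ ≤ M) {a h : ℝ} (ha : 0 ≤ a) (hh : 0 ≤ h)
    (hT : 2 * a + h ≤ T) (n : ℕ) (hn : n * h ≤ 2 * a) (x : H) :
    n * ‖S (a + h) x - S a x‖ ^ 2 ≤ 4 * M ^ 3 * ‖x‖ ^ 2 := by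
  have hM0 : 0 ≤ M := (norm_nonneg _).trans (hM 0 ⟨le_rfl, by linarith⟩)
  set f : ℕ → ℝ := fun k => ⟪S (k * h) x, x⟫ with hf
  have hfb : ∀ k : ℕ, k ≤ n + 1 → |f k| ≤ M * ‖x‖ ^ 2 := by
    intro k hk
    have hk' : (k : ℝ) ≤ n + 1 := by exact_mod_cast hk
    have hmem : (k : ℝ) * h ∈ Icc 0 T := ⟨by positivity, by nlinarith⟩
    calc |f k| ≤ ‖S (k * h) x‖ * ‖x‖ := abs_real_inner_le_norm _ _
      _ ≤ (M * ‖x‖) * ‖x‖ := by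
        gcongr
        exact (S (k * h)).le_of_opNorm_le (hM _ hmem) x
      _ = M * ‖x‖ ^ 2 := by ring
  have hstep : ∀ k ∈ Finset.range n, ‖S (a + h) x - S a x‖ ^ 2 ≤
      M ^ 2 * ((f (k + 1 + 1) - f (k + 1)) - (f (k + 1) - f k)) := by
    intro k hk
    have hk' : (k : ℝ) ≤ n := by exact_mod_cast (Finset.mem_range.1 hk).le
    have hka : (k : ℝ) * h / 2 ≤ a := by nlinarith
    have hk0 : 0 ≤ (k : ℝ) * h / 2 := by positivity
    have hd := second_difference S hSadd hSsa hk0 hh x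
    have he : (f (k + 1 + 1) - f (k + 1)) - (f (k + 1) - f k) =
        ‖S (k * h / 2 + h) x - S (k * h / 2) x‖ ^ 2 := by
      rw [hd]
      simp only [hf]
      push_cast
      ring_nf
    rw [he, ← mul_pow]
    have h1 : S (a + h) x - S a x =
        S (a - k * h / 2) (S (k * h / 2 + h) x - S (k * h / 2) x) := by
      rw [map_sub, ← ContinuousLinearMap.comp_apply, ← ContinuousLinearMap.comp_apply,
        ← hSadd _ _ (by positivity) (by linarith), ← hSadd _ _ hk0 (by linarith)]
      congr 3 <;> ring_nf
    rw [h1]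
    gcongr
    exact (S _).le_of_opNorm_le (hM _ ⟨by linarith, by linarith⟩) _
  have hsum := Finset.sum_le_sum hstep
  rw [← Finset.mul_sum, Finset.sum_range_sub (fun k => f (k + 1) - f k)] at hsum
  simp only [Finset.sum_const, Finset.card_range, nsmul_eq_mul] at hsum
  have b1 := abs_le.1 (hfb (n + 1) le_rfl)
  have b2 := abs_le.1 (hfb n (by omega))
  have b3 := abs_le.1 (hfb (0 + 1) (by omega))
  have b4 := abs_le.1 (hfb 0 (by omega))
  calc (n : ℝ) * ‖S (a + h) x - S a x‖ ^ 2
      ≤ M ^ 2 * ((f (n + 1) - f n) - (f (0 + 1) - f 0)) := hsum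
    _ ≤ M ^ 2 * (4 * (M * ‖x‖ ^ 2)) := by
      gcongr
      linarith [b1.2, b2.1, b3.1, b4.2]
    _ = 4 * M ^ 3 * ‖x‖ ^ 2 := by ring

lemma exists_bound_Icc [CompleteSpace H] (S : ℝ → H →L[ℝ] H)
    (hScont : ∀ x : H, ContinuousOn (fun t => S t x) (Set.Ici 0)) (T : ℝ) :
    ∃ M, 0 ≤ M ∧ ∀ t ∈ Icc 0 T, ‖S t‖ ≤ M := by
  obtain ⟨C, hC⟩ := banach_steinhaus (g := fun t : Icc (0 : ℝ) T => S t) (by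
    intro x
    obtain ⟨C, hC⟩ := isCompact_Icc.exists_bound_of_continuousOn
      ((hScont x).mono (Icc_subset_Ici_self : Icc 0 T ⊆ Ici 0))
    exact ⟨C, fun t => hC t t.2⟩)
  exact ⟨max C 0, le_max_right _ _, fun t ht => (hC ⟨t, ht⟩).trans (le_max_left _ _)⟩

/-- A self-adjoint `C₀`-semigroup is continuous in operator norm on `(0,∞)`. -/
lemma continuousOn_norm_of_selfAdjoint [CompleteSpace H] (S : ℝ → H →L[ℝ] H)
    (hSadd : ∀ s t : ℝ, 0 ≤ s → 0 ≤ t → S (t + s) = (S t).comp (S s))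
    (hScont : ∀ x : H, ContinuousOn (fun t => S t x) (Set.Ici 0))
    (hSsa : ∀ t : ℝ, 0 ≤ t → ∀ x y : H, ⟪S t x, y⟫ = ⟪x, S t y⟫) :
    ContinuousOn S (Ioi 0) := by
  intro t ht
  rw [mem_Ioi] at ht
  apply ContinuousAt.continuousWithinAt
  obtain ⟨M, hM0, hM⟩ := exists_bound_Icc S hScont (4 * t)
  rw [Metric.continuousAt_iff]
  intro ε hε
  obtain ⟨n, hn⟩ := exists_nat_gt (4 * M ^ 3 / (ε / 2) ^ 2)
  have hn0 : (0 : ℝ) < n := lt_of_le_of_lt (by positivity) hn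
  have hn1 : (1 : ℝ) ≤ n := by exact_mod_cast (by exact_mod_cast hn0 : 0 < n)
  rw [div_lt_iff₀ (by positivity)] at hn
  have key : ∀ a h : ℝ, t / 2 ≤ a → a ≤ t → 0 ≤ h → n * h ≤ t → ‖S (a + h) - S a‖ ≤ ε / 2 := by
    intro a h ha hat hh hnh
    refine ContinuousLinearMap.opNorm_le_bound _ (by positivity) fun x => ?_
    have hb := mul_norm_sub_sq_le S hSadd hSsa hM (by linarith : 0 ≤ a) hh (by nlinarith) n
      (by linarith) x
    rw [sub_apply]
    refine le_of_sq_le_sq ?_ (by positivity)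
    refine le_of_mul_le_mul_left ?_ hn0
    calc _ ≤ 4 * M ^ 3 * ‖x‖ ^ 2 := hb
      _ ≤ (n * (ε / 2) ^ 2) * ‖x‖ ^ 2 := by gcongr
      _ = _ := by ring
  refine ⟨t / (2 * n), by positivity, fun s hs => ?_⟩
  rw [Real.dist_eq, lt_div_iff₀ (by positivity)] at hs
  have hnn := abs_nonneg (s - t)
  rw [dist_eq_norm]
  refine lt_of_le_of_lt ?_ (half_lt_self hε)
  rcases le_total t s with hts | hst
  · rw [abs_of_nonneg (by linarith)] at hs hnn
    have := key t (s - t) (by linarith) le_rfl hnn (by nlinarith)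
    rwa [add_sub_cancel] at this
  · rw [abs_of_nonpos (by linarith)] at hs hnn
    have := key s (t - s) (by nlinarith) hst (by linarith) (by nlinarith)
    rwa [add_sub_cancel, norm_sub_rev] at this

end Aux

/-- Let `S` be a `C₀`-semigroup on a real separable Hilbert space `H`
with each `S(t)` self-adjoint, let `Q` be bounded linear with `Q ∘ S(t) = S(t) ∘ Q` for
all `t ≥ 0`, and let `γ ∈ (1/2,∞)`.  Then for every `t ≥ 0` both `𝓛(H)`-valued Bochner
integrals below exist and
`∫_0^t (t−r)^{2γ−2} S(t−r) ∘ Q ∘ S(t−r) dr = 2^{1−2γ} ∫_0^{2t} u^{2γ−2} Q ∘ S(u) du`. -/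
theorem stmt13 {H : Type*} [NormedAddCommGroup H] [InnerProductSpace ℝ H]
    [CompleteSpace H] [SecondCountableTopology H]
    (S : ℝ → H →L[ℝ] H)
    (hS0 : S 0 = ContinuousLinearMap.id ℝ H)
    (hSadd : ∀ s t : ℝ, 0 ≤ s → 0 ≤ t → S (t + s) = (S t).comp (S s))
    (hScont : ∀ x : H, ContinuousOn (fun t => S t x) (Set.Ici 0))
    (hSsa : ∀ t : ℝ, 0 ≤ t → ∀ x y : H, ⟪S t x, y⟫ = ⟪x, S t y⟫)
    (Q : H →L[ℝ] H) (hQ : ∀ t : ℝ, 0 ≤ t → Q.comp (S t) = (S t).comp Q)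
    (γ : ℝ) (hγ : 1 / 2 < γ) :
    ∀ t : ℝ, 0 ≤ t →
      IntegrableOn
        (fun r => (t - r) ^ (2 * γ - 2) • ((S (t - r)).comp (Q.comp (S (t - r)))))
        (Set.Ioo 0 t) volume ∧
      IntegrableOn (fun u => u ^ (2 * γ - 2) • (Q.comp (S u)))
        (Set.Ioo 0 (2 * t)) volume ∧
      ∫ r in Set.Ioo (0:ℝ) t,
          (t - r) ^ (2 * γ - 2) • ((S (t - r)).comp (Q.comp (S (t - r)))) =
        (2:ℝ) ^ (1 - 2 * γ) •
          ∫ u in Set.Ioo (0:ℝ) (2 * t), u ^ (2 * γ - 2) • (Q.comp (S u)) := by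
  intro t ht
  set G : ℝ → H →L[ℝ] H := fun u => u ^ (2 * γ - 2) • (Q.comp (S u)) with hG
  set F : ℝ → H →L[ℝ] H :=
    fun r => (t - r) ^ (2 * γ - 2) • ((S (t - r)).comp (Q.comp (S (t - r)))) with hF
  obtain ⟨M, hM0, hM⟩ := exists_bound_Icc S hScont (2 * t)
  have hcont := continuousOn_norm_of_selfAdjoint S hSadd hScont hSsa
  have hGint : IntegrableOn G (Ioo 0 (2 * t)) volume := by
    have hpow : IntegrableOn (fun u : ℝ => u ^ (2 * γ - 2)) (Ioo 0 (2 * t)) volume :=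
      (intervalIntegrable_iff_integrableOn_Ioo_of_le (by linarith)).1
        (intervalIntegral.intervalIntegrable_rpow' (by linarith))
    have hmeas : AEStronglyMeasurable (fun u => Q.comp (S u))
        (volume.restrict (Ioo 0 (2 * t))) :=
      ContinuousOn.aestronglyMeasurable
        (continuousOn_const.clm_comp (hcont.mono Ioo_subset_Ioi_self)) measurableSet_Ioo
    refine Integrable.mono' (hpow.norm.mul_const (‖Q‖ * M))
      (hpow.aestronglyMeasurable.smul hmeas) ?_
    filter_upwards [ae_restrict_mem measurableSet_Ioo] with u hu
    rw [hG, norm_smul]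
    gcongr
    exact (Q.opNorm_comp_le _).trans (by gcongr; exact hM u ⟨hu.1.le, hu.2.le⟩)
  have hGii : IntervalIntegrable G volume 0 (2 * t) :=
    (intervalIntegrable_iff_integrableOn_Ioo_of_le (by linarith)).2 hGint
  have hFG : ∀ r ∈ Ioo 0 t, F r = ((2 : ℝ) ^ (2 * γ - 2))⁻¹ • G (2 * t - 2 * r) := by
    intro r hr
    have h0 : 0 ≤ t - r := by linarith [hr.2]
    have h2 : (2 : ℝ) ^ (2 * γ - 2) ≠ 0 := by positivity
    simp only [hF, hG]
    rw [← mul_sub, Real.mul_rpow (by norm_num) h0, smul_smul, inv_mul_cancel_left₀ h2,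
      two_mul (t - r), hSadd _ _ h0 h0, ← ContinuousLinearMap.comp_assoc,
      ← ContinuousLinearMap.comp_assoc, hQ _ h0]
  have hGc : IntervalIntegrable (fun r => G (2 * t - 2 * r)) volume 0 t := by
    have h1 := (hGii.comp_sub_left (2 * t)).comp_mul_left (c := 2)
    simpa using h1.symm
  have hGcI : IntegrableOn (fun r => ((2 : ℝ) ^ (2 * γ - 2))⁻¹ • G (2 * t - 2 * r))
      (Ioo 0 t) volume :=
    Integrable.smul ((2 : ℝ) ^ (2 * γ - 2))⁻¹
      ((intervalIntegrable_iff_integrableOn_Ioo_of_le ht).1 hGc)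
  refine ⟨hGcI.congr_fun (fun r hr => (hFG r hr).symm) measurableSet_Ioo, hGint, ?_⟩
  rw [setIntegral_congr_fun measurableSet_Ioo hFG, integral_smul,
    ← integral_Ioc_eq_integral_Ioo, ← integral_Ioc_eq_integral_Ioo,
    ← intervalIntegral.integral_of_le ht, ← intervalIntegral.integral_of_le (by linarith),
    intervalIntegral.integral_comp_sub_mul _ (two_ne_zero), smul_smul]
  have hc : ((2 : ℝ) ^ (2 * γ - 2))⁻¹ * 2⁻¹ = 2 ^ (1 - 2 * γ) := by
    rw [← Real.rpow_neg (by norm_num), ← Real.rpow_neg_one 2, ← Real.rpow_add (by norm_num)]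
    ring_nf
  rw [hc]
  simp [hG]
end

section
/- Let S be a C₀-semigroup on a real separable Hilbert space H such that S(t) is self-adjoint for every t ≥ 0 and S is exponentially stable, i.e. there exist M ∈ [1,∞) and w ∈ (0,∞) with ‖S(t)‖_{𝓛(H)} ≤ M e^{−wt} for all t ≥ 0. Let Q : H → H be a bounded linear operator with Q∘S(t) = S(t)∘Q for all t ≥ 0, and let γ ∈ (1/2, ∞). Then the 𝓛(H)-valued improper Bochner integral ∫_0^∞ u^{2γ−2} · Q∘S(u) du converges, and in the operator norm of 𝓛(H) one has lim_{t→∞} Γ(γ)⁻² ∫_0^t (t−r)^{2γ−2} · S(t−r)∘Q∘S(t−r) dr = (Γ(γ−1/2) / (2√π Γ(γ))) · Γ(2γ−1)⁻¹ ∫_0^∞ u^{2γ−2} · Q∘S(u) du. (Under the paper's definition A^{−α} = Γ(α)⁻¹ ∫_0^∞ t^{α−1} S(t) dt of negative fractional powers of the negative generator A, the right-hand side is Γ(γ−1/2)(2√π Γ(γ))⁻¹ · A^{1−2γ}Q, i.e. Corollary 4.2.) -/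
open MeasureTheory Filter Topology Set
open scoped RealInnerProductSpace

/-!
Self-adjointness makes `t ↦ S t` norm continuous on `(0, ∞)`, which is what gives the
`𝓛(H)`-valued integrals a meaning. Put `y = x - S h x`. Telescoping gives
`∑_{k<n} ‖S (k h / 2) y‖² = ∑_{k<n} ⟪S (k h) y, y⟫ = ⟪x - S (n h) x, y⟫`,
which is bounded by a multiple of `‖x‖²` that does not depend on `n` or `h`. Each summand is at
least `‖S s y‖² / M²` as soon as `n h / 2 ≤ s`, so `‖S s - S (s + h)‖ = O(n^{-1/2})`
(`norm_sub_shift_sq_le`).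

Integrability then follows from the exponential bound. By the commutation relation and the
semigroup law, `S u ∘ Q ∘ S u = Q ∘ S (2 u)`; the substitutions `u = t - r` and `v = 2 u` give
the limit `Γ(γ)⁻² 2^{1-2γ} ∫ v^{2γ-2} Q ∘ S v dv`, and Legendre's duplication formula
rewrites the constant.
-/

/-- If `n h / 2 ≤ s`, the increment `S s - S (s + h)` of a bounded self-adjoint semigroup has
norm `O(n^{-1/2})`, uniformly in `s` and `h`. -/
lemma norm_sub_shift_sq_le {H : Type*} [NormedAddCommGroup H] [InnerProductSpace ℝ H]
    (S : ℝ → H →L[ℝ] H)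
    (hS0 : S 0 = ContinuousLinearMap.id ℝ H)
    (hSadd : ∀ s t : ℝ, 0 ≤ s → 0 ≤ t → S (t + s) = (S t).comp (S s))
    (hSsa : ∀ t : ℝ, 0 ≤ t → ∀ x y : H, ⟪S t x, y⟫ = ⟪x, S t y⟫)
    (M : ℝ) (hM : 1 ≤ M) (hbd : ∀ t : ℝ, 0 ≤ t → ‖S t‖ ≤ M)
    (n : ℕ) (h s : ℝ) (hh : 0 ≤ h) (hs : n * (h / 2) ≤ s) (x : H) :
    n * ‖S s x - S (s + h) x‖ ^ 2 ≤ (M * (1 + M) * ‖x‖) ^ 2 := by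
  have hbx : ∀ t : ℝ, 0 ≤ t → ∀ z : H, ‖S t z‖ ≤ M * ‖z‖ := fun t ht z =>
    (S t).le_of_opNorm_le (hbd t ht) z
  have hadd : ∀ a b : ℝ, 0 ≤ a → 0 ≤ b → ∀ z, S (a + b) z = S a (S b z) := by
    intro a b ha hb z
    rw [hSadd b a hb ha]; rfl
  set y := x - S h x with hy
  have hs0 : 0 ≤ s := le_trans (by positivity) hs
  have hsy : S s x - S (s + h) x = S s y := by
    rw [hadd s h hs0 hh, hy, map_sub]
  have hynorm : ‖y‖ ≤ (1 + M) * ‖x‖ := by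
    have := norm_sub_le x (S h x)
    have := hbx h hh x
    rw [hy]; linarith
  have hsq : ∀ k : ℕ, ‖S (k * (h / 2)) y‖ ^ 2 = ⟪S (k * h) y, y⟫ := by
    intro k
    have h0 : 0 ≤ (k : ℝ) * (h / 2) := by positivity
    rw [← real_inner_self_eq_norm_sq, ← hSsa _ h0, ← hadd _ _ h0 h0]
    congr 3; ring
  have htel : ∑ k ∈ Finset.range n, S (k * h) y = x - S (n * h) x := by
    have : ∀ k : ℕ, S (k * h) y = S (k * h) x - S ((k + 1 : ℕ) * h) x := by
      intro k
      have h0 : 0 ≤ (k : ℝ) * h := by positivity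
      have : ((k + 1 : ℕ) : ℝ) * h = k * h + h := by push_cast; ring
      rw [this, hadd _ _ h0 hh, hy, map_sub]
    simp_rw [this]
    rw [Finset.sum_range_sub' (fun k : ℕ => S (k * h) x)]
    simp [hS0]
  have hsum : ∑ k ∈ Finset.range n, ‖S (k * (h / 2)) y‖ ^ 2 ≤ ((1 + M) * ‖x‖) ^ 2 := by
    simp_rw [hsq]
    rw [← sum_inner, htel]
    have h1 : ‖x - S (n * h) x‖ ≤ (1 + M) * ‖x‖ := by
      have := norm_sub_le x (S (n * h) x)
      have := hbx (n * h) (by positivity) x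
      linarith
    calc _ ≤ ‖x - S (n * h) x‖ * ‖y‖ := real_inner_le_norm _ _
      _ ≤ ((1 + M) * ‖x‖) * ((1 + M) * ‖x‖) := by gcongr
      _ = _ := by ring
  have hterm : ∀ k ∈ Finset.range n, ‖S s y‖ ^ 2 ≤ M ^ 2 * ‖S (k * (h / 2)) y‖ ^ 2 := by
    intro k hk
    have hkn : (k : ℝ) ≤ n := by exact_mod_cast (Finset.mem_range.1 hk).le
    have h0 : 0 ≤ (k : ℝ) * (h / 2) := by positivity
    have h1 : 0 ≤ s - k * (h / 2) := by
      have : (k : ℝ) * (h / 2) ≤ n * (h / 2) := by gcongr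
      linarith
    have h2 : S s y = S (s - k * (h / 2)) (S (k * (h / 2)) y) := by
      rw [← hadd _ _ h1 h0]; congr 2; ring
    rw [h2, ← mul_pow]
    gcongr
    exact hbx _ h1 _
  have := Finset.sum_le_sum hterm
  rw [Finset.sum_const, Finset.card_range, nsmul_eq_mul, ← Finset.mul_sum] at this
  rw [hsy]
  calc _ ≤ _ := this
    _ ≤ M ^ 2 * ((1 + M) * ‖x‖) ^ 2 := by gcongr
    _ = _ := by ring

/-- A bounded self-adjoint semigroup is continuous in operator norm on `(0, ∞)`. -/
lemma continuousOn_of_selfAdjoint_semigroup {H : Type*} [NormedAddCommGroup H]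
    [InnerProductSpace ℝ H]
    (S : ℝ → H →L[ℝ] H)
    (hS0 : S 0 = ContinuousLinearMap.id ℝ H)
    (hSadd : ∀ s t : ℝ, 0 ≤ s → 0 ≤ t → S (t + s) = (S t).comp (S s))
    (hSsa : ∀ t : ℝ, 0 ≤ t → ∀ x y : H, ⟪S t x, y⟫ = ⟪x, S t y⟫)
    (M : ℝ) (hM : 1 ≤ M) (hbd : ∀ t : ℝ, 0 ≤ t → ‖S t‖ ≤ M) :
    ContinuousOn S (Ioi 0) := by
  have key : ∀ n : ℕ, 0 < n → ∀ h s : ℝ, 0 ≤ h → n * (h / 2) ≤ s →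
      ‖S s - S (s + h)‖ ≤ M * (1 + M) / √n := by
    intro n hn h s hh hs
    have hn' : (0 : ℝ) < n := by exact_mod_cast hn
    refine ContinuousLinearMap.opNorm_le_bound _ (by positivity) fun x => ?_
    have := norm_sub_shift_sq_le S hS0 hSadd hSsa M hM hbd n h s hh hs x
    rw [div_mul_eq_mul_div, le_div_iff₀ (by positivity)]
    refine (sq_le_sq₀ (by positivity) (by positivity)).1 ?_
    rw [mul_pow, Real.sq_sqrt hn'.le, mul_comm]
    exact this
  intro s₀ hs₀
  have hs₀ : 0 < s₀ := hs₀
  refine ContinuousAt.continuousWithinAt ?_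
  rw [Metric.continuousAt_iff]
  intro ε hε
  obtain ⟨n, hn⟩ := exists_nat_gt ((M * (1 + M) / ε) ^ 2)
  have hn' : (0 : ℝ) < n := lt_of_le_of_lt (by positivity) hn
  have hlt : M * (1 + M) / √n < ε := by
    rw [div_lt_iff₀ (by positivity), mul_comm ε, ← div_lt_iff₀ hε]
    exact Real.lt_sqrt_of_sq_lt hn
  refine ⟨min (s₀ / 2) (s₀ / n), by positivity, fun {t} ht => ?_⟩
  rw [Real.dist_eq, lt_min_iff] at ht
  obtain ⟨ht1, ht2⟩ := ht
  rw [lt_div_iff₀ hn'] at ht2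
  rw [abs_lt] at ht1
  refine lt_of_le_of_lt ?_ hlt
  rcases le_total s₀ t with hle | hle
  · rw [abs_of_nonneg (by linarith)] at ht2
    have := key n (by exact_mod_cast hn') (t - s₀) s₀ (by linarith) (by linarith)
    rw [dist_comm, dist_eq_norm]
    simpa using this
  · rw [abs_of_nonpos (by linarith)] at ht2
    have := key n (by exact_mod_cast hn') (s₀ - t) t (by linarith) (by linarith)
    rw [dist_eq_norm]
    simpa using this

/-- The constant identity is Legendre's duplication formula at `γ - 1/2`. -/
lemma gamma_constant_eq (γ : ℝ) (hγ : 1 / 2 < γ) :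
    Real.Gamma (γ - 1 / 2) / (2 * Real.sqrt Real.pi * Real.Gamma γ) * (Real.Gamma (2 * γ - 1))⁻¹
      = (Real.Gamma γ ^ 2)⁻¹ * (((2 : ℝ) ^ (2 * γ - 2))⁻¹ * 2⁻¹) := by
  have h := Real.Gamma_mul_Gamma_add_half (γ - 1 / 2)
  have e1 : γ - 1 / 2 + 1 / 2 = γ := by ring
  have e2 : 2 * (γ - 1 / 2) = 2 * γ - 1 := by ring
  have e3 : 1 - (2 * γ - 1) = -(2 * γ - 2) := by ring
  rw [e1, e2, e3, Real.rpow_neg (by norm_num)] at h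
  have g1 : 0 < Real.Gamma γ := Real.Gamma_pos_of_pos (by linarith)
  have g2 : 0 < Real.Gamma (2 * γ - 1) := Real.Gamma_pos_of_pos (by linarith)
  have hp : 0 < √Real.pi := Real.sqrt_pos.2 Real.pi_pos
  have h2 : (0 : ℝ) < 2 ^ (2 * γ - 2) := by positivity
  generalize (2 : ℝ) ^ (2 * γ - 2) = c at *
  generalize Real.Gamma (γ - 1 / 2) = a at *
  generalize Real.Gamma (2 * γ - 1) = b at *
  generalize Real.Gamma γ = d at *
  have ha : a = b * c⁻¹ * √Real.pi / d := by rw [← h]; field_simp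
  rw [ha]
  field_simp

/-- Let `S` be an exponentially stable `C₀`-semigroup of self-adjoint
operators on a real separable Hilbert space `H` (`‖S(t)‖ ≤ M e^{−wt}` with `M ≥ 1`,
`w > 0`), let `Q` be bounded linear commuting with every `S(t)`, and `γ ∈ (1/2,∞)`.
Then `∫_0^∞ u^{2γ−2} Q ∘ S(u) du` converges as an `𝓛(H)`-valued Bochner integral, and
in operator norm
`lim_{t→∞} Γ(γ)⁻² ∫_0^t (t−r)^{2γ−2} S(t−r) ∘ Q ∘ S(t−r) dr
  = (Γ(γ−1/2) / (2 √π Γ(γ))) Γ(2γ−1)⁻¹ ∫_0^∞ u^{2γ−2} Q ∘ S(u) du`. -/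
theorem stmt14 {H : Type*} [NormedAddCommGroup H] [InnerProductSpace ℝ H]
    [CompleteSpace H] [SecondCountableTopology H]
    (S : ℝ → H →L[ℝ] H)
    (hS0 : S 0 = ContinuousLinearMap.id ℝ H)
    (hSadd : ∀ s t : ℝ, 0 ≤ s → 0 ≤ t → S (t + s) = (S t).comp (S s))
    (hScont : ∀ x : H, ContinuousOn (fun t => S t x) (Set.Ici 0))
    (hSsa : ∀ t : ℝ, 0 ≤ t → ∀ x y : H, ⟪S t x, y⟫ = ⟪x, S t y⟫)
    (M w : ℝ) (hM : 1 ≤ M) (hw : 0 < w)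
    (hstab : ∀ t : ℝ, 0 ≤ t → ‖S t‖ ≤ M * Real.exp (-w * t))
    (Q : H →L[ℝ] H) (hQ : ∀ t : ℝ, 0 ≤ t → Q.comp (S t) = (S t).comp Q)
    (γ : ℝ) (hγ : 1 / 2 < γ) :
    IntegrableOn (fun u => u ^ (2 * γ - 2) • (Q.comp (S u))) (Set.Ioi 0) volume ∧
    Tendsto
      (fun t : ℝ => (Real.Gamma γ ^ 2)⁻¹ •
        ∫ r in Set.Ioo (0:ℝ) t,
          (t - r) ^ (2 * γ - 2) • ((S (t - r)).comp (Q.comp (S (t - r)))))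
      atTop
      (𝓝 ((Real.Gamma (γ - 1 / 2) / (2 * Real.sqrt Real.pi * Real.Gamma γ) *
            (Real.Gamma (2 * γ - 1))⁻¹) •
        ∫ u in Set.Ioi (0:ℝ), u ^ (2 * γ - 2) • (Q.comp (S u)))) := by
  have hbd : ∀ t : ℝ, 0 ≤ t → ‖S t‖ ≤ M := fun t ht => (hstab t ht).trans <|
    mul_le_of_le_one_right (by linarith) (Real.exp_le_one_iff.2 (by nlinarith))
  have hcont := continuousOn_of_selfAdjoint_semigroup S hS0 hSadd hSsa M hM hbd
  set F : ℝ → H →L[ℝ] H := fun u => u ^ (2 * γ - 2) • (Q.comp (S u)) with hF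
  have hFcont : ContinuousOn F (Ioi 0) := by
    apply ContinuousOn.fun_smul
    · exact fun u hu => (Real.continuousAt_rpow_const _ _
        (Or.inl (ne_of_gt hu))).continuousWithinAt
    · exact continuousOn_const.clm_comp hcont
  have hFint : IntegrableOn F (Ioi 0) volume := by
    have hdom : IntegrableOn
        (fun u : ℝ => ‖Q‖ * M * (u ^ (2 * γ - 2) * Real.exp (-w * u))) (Ioi 0) := by
      refine Integrable.const_mul ?_ _
      have := integrableOn_rpow_mul_exp_neg_mul_rpow (s := 2 * γ - 2) (p := 1) (b := w)
        (by linarith) one_pos hw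
      simpa [IntegrableOn] using this
    refine Integrable.mono' hdom (hFcont.aestronglyMeasurable measurableSet_Ioi) ?_
    refine (ae_restrict_iff' measurableSet_Ioi).2 (ae_of_all _ fun u hu => ?_)
    have hu : 0 < u := hu
    have hp : 0 ≤ u ^ (2 * γ - 2) := by positivity
    simp only [hF, norm_smul, Real.norm_eq_abs, abs_of_nonneg hp]
    calc _ ≤ u ^ (2 * γ - 2) * (‖Q‖ * (M * Real.exp (-w * u))) := by
          gcongr
          exact (ContinuousLinearMap.opNorm_comp_le _ _).trans
            (by gcongr; exact hstab u hu.le)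
      _ = _ := by ring
  refine ⟨hFint, ?_⟩
  set c : ℝ := ((2 : ℝ) ^ (2 * γ - 2))⁻¹ with hc
  have hconj : ∀ u : ℝ, 0 < u →
      u ^ (2 * γ - 2) • ((S u).comp (Q.comp (S u))) = c • F (2 * u) := by
    intro u hu
    have h2 : (2 : ℝ) ^ (2 * γ - 2) ≠ 0 := by positivity
    have h1 : (S u).comp (Q.comp (S u)) = Q.comp (S (2 * u)) := by
      rw [two_mul, hSadd u u hu.le hu.le, ← ContinuousLinearMap.comp_assoc, ← hQ u hu.le,
        ContinuousLinearMap.comp_assoc]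
    simp only [hF]
    rw [h1, smul_smul, Real.mul_rpow (by norm_num) hu.le, hc, inv_mul_cancel_left₀ h2]
  have hG : IntegrableOn (fun u => c • F (2 * u)) (Ioi 0) := by
    refine Integrable.smul c ?_
    have := (integrableOn_Ioi_comp_mul_left_iff F 0 (a := 2) (by norm_num)).2 (by simpa using hFint)
    exact this
  have hlim := intervalIntegral_tendsto_integral_Ioi 0 hG tendsto_id
  have hval : ∫ u in Ioi (0:ℝ), c • F (2 * u) = (c * 2⁻¹) • ∫ u in Ioi (0:ℝ), F u := by
    rw [integral_smul, integral_comp_mul_left_Ioi F 0 (by norm_num : (0:ℝ) < 2), mul_zero,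
      smul_smul]
  rw [hval] at hlim
  rw [gamma_constant_eq γ hγ, ← smul_smul]
  refine Tendsto.const_smul ?_ _
  refine hlim.congr' ?_
  filter_upwards [eventually_gt_atTop 0] with t ht
  have hsub : ∫ u in (0:ℝ)..t, c • F (2 * u) = ∫ r in (0:ℝ)..t, c • F (2 * (t - r)) := by
    rw [intervalIntegral.integral_comp_sub_left (fun u => c • F (2 * u)) t]
    simp
  rw [id, hsub, intervalIntegral.integral_of_le ht.le, integral_Ioc_eq_integral_Ioo]
  refine setIntegral_congr_fun measurableSet_Ioo fun r hr => ?_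
  exact (hconj (t - r) (by linarith [hr.2])).symm
end

section
/- Let κ ∈ (0,∞) and γ ∈ (1/2,∞), and for s,t ≥ 0 define ϱ(s,t) = Γ(γ)⁻² ∫_0^{min(s,t)} ((s−r)(t−r))^{γ−1} e^{−κ(s+t−2r)} dr. Then for every t ≥ 0 and every h > 0 one has ϱ(t,t+h) = 2^{1−2γ} Γ(γ)⁻² ∫_h^{2t+h} ((u+h)(u−h))^{γ−1} e^{−κu} du, and consequently for every h > 0, lim_{t→∞} ϱ(t,t+h) = 2^{1−2γ} Γ(γ)⁻² ∫_h^∞ (u²−h²)^{γ−1} e^{−κu} du. -/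
/-!
The substitution `u = 2t + h - 2r` maps `(0, t)` onto `(h, 2t + h)` and turns `(t - r)(t + h - r)`
into `(u - h)(u + h) / 4`; the factor `4^(1-γ)` together with the Jacobian `1/2` gives `2^(1-2γ)`.

The limit follows because the integrand is integrable on `(h, ∞)`
(`integrableOn_sq_sub_sq_rpow_mul_exp`), so that the integrals over `(h, 2t + h)` converge to
the integral over `(h, ∞)`. Integrability comes from comparison with a Gamma integrand:
for `γ ≥ 1` one has `(u² - h²)^(γ-1) ≤ u^(2γ-2)`, and for `γ < 1` the factor `(u + h)^(γ-1)` is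
bounded by `h^(γ-1)` while `(u - h)^(γ-1)` is integrable at `h`.
-/

open MeasureTheory Filter Topology Set

lemma integrableOn_sq_sub_sq_rpow_mul_exp {κ γ h : ℝ} (hκ : 0 < κ) (hγ : 1 / 2 < γ) (hh : 0 < h) :
    IntegrableOn (fun u : ℝ => (u ^ 2 - h ^ 2) ^ (γ - 1) * Real.exp (-κ * u)) (Ioi h) := by
  have gammaInt : ∀ s : ℝ, -1 < s →
      IntegrableOn (fun u : ℝ => u ^ s * Real.exp (-κ * u)) (Ioi 0) := fun s hs => by
    simpa using integrableOn_rpow_mul_exp_neg_mul_rpow (p := 1) hs one_pos hκ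
  have hmeas : AEStronglyMeasurable
      (fun u : ℝ => (u ^ 2 - h ^ 2) ^ (γ - 1) * Real.exp (-κ * u)) (volume.restrict (Ioi h)) :=
    Measurable.aestronglyMeasurable (by fun_prop)
  rcases le_or_gt 1 γ with h1 | h1
  · refine ((gammaInt (2 * (γ - 1)) (by linarith)).mono_set (Ioi_subset_Ioi hh.le)).mono' hmeas ?_
    filter_upwards [ae_restrict_mem measurableSet_Ioi] with u hu
    have hu : h < u := hu
    have hpos : 0 ≤ u ^ 2 - h ^ 2 := by nlinarith
    rw [Real.norm_of_nonneg (by positivity), Real.rpow_mul (by linarith), Real.rpow_two]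
    gcongr
    · nlinarith [sq_nonneg h]
  · have hshift : IntegrableOn (fun u : ℝ => (u - h) ^ (γ - 1) * Real.exp (-κ * (u - h)))
        (Ioi h) := by
      have := ((integrable_indicator_iff measurableSet_Ioi).2
        (gammaInt (γ - 1) (by linarith))).comp_sub_right h
      rw [← integrable_indicator_iff measurableSet_Ioi]
      refine this.congr (Eventually.of_forall fun u => ?_)
      simp [indicator, sub_pos]
    refine (hshift.const_mul (h ^ (γ - 1))).mono' hmeas ?_
    filter_upwards [ae_restrict_mem measurableSet_Ioi] with u hu
    have hu : h < u := hu
    have h0 : 0 < u - h := by linarith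
    have hpos : 0 ≤ u ^ 2 - h ^ 2 := by nlinarith
    rw [Real.norm_of_nonneg (by positivity), sq_sub_sq, Real.mul_rpow (by linarith) h0.le,
      mul_assoc]
    have hb : (u + h) ^ (γ - 1) ≤ h ^ (γ - 1) :=
      Real.rpow_le_rpow_of_nonpos hh (by linarith) (by linarith)
    gcongr ?_ * (_ * Real.exp ?_)
    nlinarith

/-- Let `κ ∈ (0,∞)`, `γ ∈ (1/2,∞)` and, for `s,t ≥ 0`, define
`ϱ(s,t) = Γ(γ)⁻² ∫_0^{min(s,t)} ((s−r)(t−r))^{γ−1} e^{−κ(s+t−2r)} dr`.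
Then for every `t ≥ 0` and `h > 0`,
`ϱ(t,t+h) = 2^{1−2γ} Γ(γ)⁻² ∫_h^{2t+h} ((u+h)(u−h))^{γ−1} e^{−κu} du`,
and consequently for every `h > 0`,
`lim_{t→∞} ϱ(t,t+h) = 2^{1−2γ} Γ(γ)⁻² ∫_h^∞ (u²−h²)^{γ−1} e^{−κu} du`. -/
theorem stmt15 (κ γ : ℝ) (hκ : 0 < κ) (hγ : 1 / 2 < γ)
    (ϱ : ℝ → ℝ → ℝ)
    (hϱ : ∀ s t : ℝ, 0 ≤ s → 0 ≤ t →
      ϱ s t = (Real.Gamma γ ^ 2)⁻¹ *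
        ∫ r in Set.Ioo 0 (min s t),
          ((s - r) * (t - r)) ^ (γ - 1) * Real.exp (-κ * (s + t - 2 * r))) :
    (∀ t : ℝ, 0 ≤ t → ∀ h : ℝ, 0 < h →
      ϱ t (t + h) = (2:ℝ) ^ (1 - 2 * γ) * (Real.Gamma γ ^ 2)⁻¹ *
        ∫ u in Set.Ioo h (2 * t + h),
          ((u + h) * (u - h)) ^ (γ - 1) * Real.exp (-κ * u)) ∧
    (∀ h : ℝ, 0 < h →
      Tendsto (fun t : ℝ => ϱ t (t + h)) atTop
        (𝓝 ((2:ℝ) ^ (1 - 2 * γ) * (Real.Gamma γ ^ 2)⁻¹ *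
          ∫ u in Set.Ioi h, (u ^ 2 - h ^ 2) ^ (γ - 1) * Real.exp (-κ * u)))) := by
  have part1 : ∀ t : ℝ, 0 ≤ t → ∀ h : ℝ, 0 < h →
      ϱ t (t + h) = (2:ℝ) ^ (1 - 2 * γ) * (Real.Gamma γ ^ 2)⁻¹ *
        ∫ u in Set.Ioo h (2 * t + h),
          ((u + h) * (u - h)) ^ (γ - 1) * Real.exp (-κ * u) := by
    intro t ht h hh
    have hsub := intervalIntegral.integral_comp_sub_mul (a := 0) (b := t) (c := 2)
      (fun u : ℝ => ((u + h) * (u - h)) ^ (γ - 1) * Real.exp (-κ * u)) two_ne_zero (2 * t + h)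
    have hleft : ∫ r in (0 : ℝ)..t, (((2 * t + h - 2 * r) + h) * ((2 * t + h - 2 * r) - h)) ^ (γ - 1)
          * Real.exp (-κ * (2 * t + h - 2 * r)) =
        (4 : ℝ) ^ (γ - 1) * ∫ r in (0 : ℝ)..t,
          ((t - r) * (t + h - r)) ^ (γ - 1) * Real.exp (-κ * (t + (t + h) - 2 * r)) := by
      rw [← intervalIntegral.integral_const_mul]
      refine intervalIntegral.integral_congr fun r hr => ?_
      rw [uIcc_of_le ht] at hr
      have h0 : 0 ≤ (t - r) * (t + h - r) :=
        mul_nonneg (by linarith [hr.2]) (by linarith [hr.2])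
      rw [← mul_assoc, ← Real.mul_rpow (by norm_num) h0]
      ring_nf
    have hpow : (2 : ℝ) ^ (1 - 2 * γ) * 4 ^ (γ - 1) = 2⁻¹ := by
      rw [show (4 : ℝ) = 2 ^ (2 : ℝ) by norm_num, ← Real.rpow_mul two_pos.le,
        ← Real.rpow_add two_pos, ← Real.rpow_neg_one]
      congr 1
      ring
    rw [hleft, mul_zero, sub_zero, show 2 * t + h - 2 * t = h by ring, smul_eq_mul,
      intervalIntegral.integral_of_le ht, intervalIntegral.integral_of_le (by linarith),
      integral_Ioc_eq_integral_Ioo, integral_Ioc_eq_integral_Ioo] at hsub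
    rw [hϱ t (t + h) ht (by linarith), min_eq_left (by linarith)]
    linear_combination (2 * (Real.Gamma γ ^ 2)⁻¹ * 2 ^ (1 - 2 * γ)) * hsub
      - 2 * (Real.Gamma γ ^ 2)⁻¹ * (∫ r in Ioo 0 t,
          ((t - r) * (t + h - r)) ^ (γ - 1) * Real.exp (-κ * (t + (t + h) - 2 * r))) * hpow
  refine ⟨part1, fun h hh => ?_⟩
  have hlim : Tendsto (fun t : ℝ => 2 * t + h) atTop atTop :=
    tendsto_atTop_add_const_right _ _ (tendsto_id.const_mul_atTop two_pos)
  refine ((intervalIntegral_tendsto_integral_Ioi h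
    (integrableOn_sq_sub_sq_rpow_mul_exp hκ hγ hh) hlim).const_mul _).congr' ?_
  filter_upwards [eventually_ge_atTop 0] with t ht
  rw [part1 t ht h hh, intervalIntegral.integral_of_le (by linarith), integral_Ioc_eq_integral_Ioo]
  simp only [sq_sub_sq]
end
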